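/- Set eps_i := 1 if i <= 2 and eps_i := 2 if i >= 3. Assume 1 <= i <= n and (i <= 3 or n <= 4). Then for every nonnegative integer m and every integer k >= 1, S(D, k*eps_i*m*omega_i) equals the k-fold Minkowski sum of S(D, eps_i*m*omega_i) with itself; that is, the polytope P(D, eps_i*m*omega_i) is a normal lattice polytope. -/

import Mathlib

open scoped Pointwise

/-- A single step in a Dyck path: `α_{p,q} → α_{p,q+1}` or `α_{p,q} → α_{p+1,q}`. -/
def RootStep (a b : ℕ × ℕ) : Prop :=
  (b.1 = a.1 ∧ b.2 = a.2 + 1) ∨ (b.1 = a.1 + 1 ∧ b.2 = a.2)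

/-- `inR n i (p,q)` means that `α_{p,q}` is a positive root of `B_n`
(`1 ≤ p ≤ n`, `p ≤ q ≤ 2n-p`) belonging to `R_i^+`, i.e. `p ≤ i ≤ q`. -/
def inR (n i : ℕ) (a : ℕ × ℕ) : Prop :=
  1 ≤ a.1 ∧ a.1 ≤ i ∧ i ≤ a.2 ∧ a.1 + a.2 ≤ 2 * n

/-- A type 1 Dyck path for `R_i^+` of `B_n`, recorded as the list of its roots. -/
def IsType1 (n i : ℕ) (L : List (ℕ × ℕ)) : Prop :=
  L ≠ [] ∧ L.Chain' RootStep ∧ (∀ x ∈ L, inR n i x) ∧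
    ((L.head? = some (1, i) ∧ L.getLast? = some (i, 2 * n - i - 1)) ∨
     (L.head? = some (1, i + 1) ∧ L.getLast? = some (i, 2 * n - i)))

/-- A type 2 (double) Dyck path for `R_i^+` of `B_n`, recorded as the pair of lists of
roots of its two constituent single paths. -/
def IsType2 (n i : ℕ) (L1 L2 : List (ℕ × ℕ)) : Prop :=
  ∃ j : ℕ, 1 ≤ j ∧ j < i ∧
    L1 ≠ [] ∧ L2 ≠ [] ∧ L1.Chain' RootStep ∧ L2.Chain' RootStep ∧
    (∀ x ∈ L1, inR n i x) ∧ (∀ x ∈ L2, inR n i x) ∧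
    L1.head? = some (1, i) ∧ L2.head? = some (2, i) ∧
    L1.getLast? = some (j, 2 * n - j) ∧ L2.getLast? = some (j + 1, 2 * n - j - 1) ∧
    (∀ x, ¬(x ∈ L1 ∧ x ∈ L2))

/-- The constant `c_i`: `1` if `i = 1` or `i = n`, and `2` if `2 ≤ i ≤ n-1`. -/
def cB (n i : ℕ) : ℕ := if i = 1 ∨ i = n then 1 else 2

/-- `SD n i m` is the set `S(D, m·ω_i)` of lattice points of the Dyck-path polytope:
multi-exponents `s` supported on `R_i^+` with `∑_{β ∈ p} s_β ≤ m` for every type 1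
Dyck path `p` and `∑_{β ∈ p} s_β ≤ m·c_i` for every type 2 Dyck path `p`.
(Elements of a Dyck path are pairwise distinct, so summation over the recording
lists agrees with summation over the underlying set of roots.) -/
def SD (n i m : ℕ) : Set ((ℕ × ℕ) → ℕ) :=
  {s | (∀ β, ¬ inR n i β → s β = 0) ∧
       (∀ L, IsType1 n i L → (L.map s).sum ≤ m) ∧
       (∀ L1 L2, IsType2 n i L1 L2 → ((L1 ++ L2).map s).sum ≤ m * cB n i)}

/-- `ε_i`: `1` if `i ≤ 2`, and `2` if `i ≥ 3`. -/
def epsB (i : ℕ) : ℕ := if i ≤ 2 then 1 else 2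

/-!
Sums of vectors add levels, so it is enough to split a vector of level `ε_i` off every vector
of level `ε_i * (m + 1)`.

For `i ≤ 3` and `i < n` a vector is an array with three rows (the third one vanishing if `i ≤ 2`)
whose third row ends in column `M = 2 * n - 2 * i`, and a path is determined by the columns `a` and
`b` in which it turns down, or in which its two strands do. Its weight is then, up to a correction
independent of the turns, a function `up a` of rows 1 and 2 plus a function `low b` of rows 2 and 3.

The root at the end of row 2, which lies only on double paths, can be removed. If an early and a
late single path are saturated, then it splits off at level 1 together with a root common to all
saturated single paths; otherwise it can be traded for a corner of row 1 or row 3. In its absence,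
the single path inequalities are equivalent to the existence of potentials on the rows. Rounding
potentials `r` to `⌊r / m⌋` splits off level 1, and the potentials can be chosen so that this
respects the double paths too unless some pair of turns is overloaded. In that case `i = 3`, and
four roots split off together at level 2. Splittings at levels 1 and 2 combine to splittings of even
vectors at level 2.

For `i = n ≤ 4` no type 1 path exists and the double paths are few enough to be treated directly.
-/

section PartialSums

/-- The partial sum `f 0 + ⋯ + f (a - 1)`, as an integer so that segment sums are differences. -/
def psum (f : ℕ → ℕ) (a : ℕ) : ℤ := ∑ c ∈ Finset.range a, (f c : ℤ)

theorem psum_zero (f : ℕ → ℕ) : psum f 0 = 0 := rfl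

theorem zero_psum (a : ℕ) : psum 0 a = 0 := by
  simp [psum]

theorem psum_succ (f : ℕ → ℕ) (a : ℕ) : psum f (a + 1) = psum f a + f a :=
  Finset.sum_range_succ _ _

theorem monotone_psum (f : ℕ → ℕ) : Monotone (psum f) :=
  monotone_nat_of_le_succ fun a => by rw [psum_succ]; omega

theorem psum_nonneg (f : ℕ → ℕ) (a : ℕ) : 0 ≤ psum f a :=
  monotone_psum f a.zero_le

end PartialSums

section Turns

/-- The array whose only nonzero value is `k`, in row `p` and column `c`. -/
def entry (p c k : ℕ) : ℕ → ℕ → ℕ := Pi.single p (Pi.single c k)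

/-- The root vector with a single one, in row `p` and column `c`. -/
abbrev unit (p c : ℕ) : ℕ → ℕ → ℕ := entry p c 1

@[grind =]
theorem entry_apply (p c k q a : ℕ) : entry p c k q a = if q = p ∧ a = c then k else 0 := by
  by_cases hq : q = p <;> simp [entry, hq, Pi.single_apply]

@[grind =]
theorem psum_entry (p c k q a : ℕ) :
    psum (entry p c k q) a = if q = p ∧ c < a then (k : ℤ) else 0 := by
  by_cases hq : q = p <;> simp [psum, entry, hq, Pi.single_apply]

theorem entry_add (p c k l : ℕ) : entry p c (k + l) = entry p c k + entry p c l := by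
  rw [entry, Pi.single_add, Pi.single_add]
  rfl

theorem unit_le_iff {p c : ℕ} {s : ℕ → ℕ → ℕ} : unit p c ≤ s ↔ 1 ≤ s p c := by
  refine ⟨fun h => by simpa [entry_apply] using h p c, fun h q d => ?_⟩
  rw [unit, entry_apply]
  split_ifs with hqd
  · rwa [hqd.1, hqd.2]
  · exact Nat.zero_le _

@[grind =]
theorem add_apply₂ (s t : ℕ → ℕ → ℕ) (p c : ℕ) : (s + t) p c = s p c + t p c := rfl

@[grind =]
theorem psum_add (s t : ℕ → ℕ → ℕ) (p a : ℕ) :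
    psum ((s + t) p) a = psum (s p) a + psum (t p) a := by
  simp [psum, Finset.sum_add_distrib]

/-- The weight of the path that runs along row 1, turns down in column `a`, and follows row 2 up to
column `M`. The value `s p c` is the multiplicity of `α_{p,i+c}`. -/
def up (M : ℕ) (s : ℕ → ℕ → ℕ) (a : ℕ) : ℤ :=
  psum (s 1) (a + 1) + psum (s 2) (M + 1) - psum (s 2) a

/-- The weight of the path that runs along row 2, turns down in column `b`, and follows row 3 up to
column `M`. -/
def low (M : ℕ) (s : ℕ → ℕ → ℕ) (b : ℕ) : ℤ :=
  psum (s 2) (b + 1) + psum (s 3) (M + 1) - psum (s 3) b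

variable {M a b : ℕ} {s : ℕ → ℕ → ℕ}

theorem up_zero (M : ℕ) (s : ℕ → ℕ → ℕ) : up M s 0 = s 1 0 + psum (s 2) (M + 1) := by
  simp [up, psum]

theorem low_self (M : ℕ) (s : ℕ → ℕ → ℕ) : low M s M = psum (s 2) (M + 1) + s 3 M := by
  rw [low, psum_succ (s 3)]
  ring

theorem up_succ (M : ℕ) (s : ℕ → ℕ → ℕ) (a : ℕ) :
    up M s (a + 1) = up M s a + s 1 (a + 1) - s 2 a := by
  rw [up, up, psum_succ (s 1) (a + 1), psum_succ (s 2) a]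
  ring

theorem low_succ (M : ℕ) (s : ℕ → ℕ → ℕ) (b : ℕ) :
    low M s (b + 1) = low M s b + s 2 (b + 1) - s 3 b := by
  rw [low, low, psum_succ (s 2) (b + 1), psum_succ (s 3) b]
  ring

@[grind =]
theorem up_add (M : ℕ) (s t : ℕ → ℕ → ℕ) (a : ℕ) : up M (s + t) a = up M s a + up M t a := by
  simp only [up, psum_add]
  ring

@[grind =]
theorem low_add (M : ℕ) (s t : ℕ → ℕ → ℕ) (b : ℕ) : low M (s + t) b = low M s b + low M t b := by
  simp only [low, psum_add]
  ring

@[grind =]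
theorem up_entry_one (M c k a : ℕ) : up M (entry 1 c k) a = if c ≤ a then (k : ℤ) else 0 := by
  simp [up, psum_entry]

@[grind =]
theorem up_entry_two (M c k a : ℕ) :
    up M (entry 2 c k) a = (if c ≤ M then (k : ℤ) else 0) - if c < a then (k : ℤ) else 0 := by
  simp [up, psum_entry]

@[grind =]
theorem up_entry_three (M c k a : ℕ) : up M (entry 3 c k) a = 0 := by
  simp [up, psum_entry]

@[grind =]
theorem low_entry_one (M c k b : ℕ) : low M (entry 1 c k) b = 0 := by
  simp [low, psum_entry]

@[grind =]
theorem low_entry_two (M c k b : ℕ) :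
    low M (entry 2 c k) b = if c ≤ b then (k : ℤ) else 0 := by
  simp [low, psum_entry]

@[grind =]
theorem low_entry_three (M c k b : ℕ) :
    low M (entry 3 c k) b = (if c ≤ M then (k : ℤ) else 0) - if c < b then (k : ℤ) else 0 := by
  simp [low, psum_entry]

theorem up_le_up_of_row_one_eq_zero (hab : a ≤ b) (h : ∀ c, a < c → c ≤ b → s 1 c = 0) :
    up M s b ≤ up M s a := by
  induction b, hab using Nat.le_induction with
  | base => rfl
  | succ b hab ih =>
    rw [up_succ, h (b + 1) (by omega) le_rfl]
    have := ih fun c hc hcb => h c hc (by omega)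
    omega

theorem up_le_up_of_row_two_eq_zero (hab : a ≤ b) (h : ∀ c, a ≤ c → c < b → s 2 c = 0) :
    up M s a ≤ up M s b := by
  induction b, hab using Nat.le_induction with
  | base => rfl
  | succ b hab ih =>
    rw [up_succ, h b hab b.lt_succ_self]
    have := ih fun c hc hcb => h c hc (by omega)
    omega

theorem low_le_low_of_row_two_eq_zero (hab : a ≤ b) (h : ∀ c, a < c → c ≤ b → s 2 c = 0) :
    low M s b ≤ low M s a := by
  induction b, hab using Nat.le_induction with
  | base => rfl
  | succ b hab ih =>
    rw [low_succ, h (b + 1) (by omega) le_rfl]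
    have := ih fun c hc hcb => h c hc (by omega)
    omega

theorem low_le_low_of_row_three_eq_zero (hab : a ≤ b) (h : ∀ c, a ≤ c → c < b → s 3 c = 0) :
    low M s a ≤ low M s b := by
  induction b, hab using Nat.le_induction with
  | base => rfl
  | succ b hab ih =>
    rw [low_succ, h b hab b.lt_succ_self]
    have := ih fun c hc hcb => h c hc (by omega)
    omega

end Turns

section Polytopes

/-- The single Dyck path inequalities at level `m` on three rows: `early` is the path from column
`0` that turns down in columns `a` and `b` and stops in column `M - 1` of row 3, `late` is the path
from column `1` that stops in column `M`. Both sides are written with the overlap of the two turns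
moved to the right. -/
structure Single (M : ℕ) (m : ℤ) (s : ℕ → ℕ → ℕ) : Prop where
  early : ∀ a b, a ≤ b → b < M → up M s a + low M s b ≤ m + psum (s 2) (M + 1) + s 3 M
  late : ∀ a b, 1 ≤ a → a ≤ b → b ≤ M → up M s a + low M s b ≤ m + psum (s 2) (M + 1) + s 1 0

/-- The single Dyck path inequalities together with those of the double Dyck paths whose two strands
turn down in columns `a` and `b`. The first strand ends in column `M + 1` of row 2. -/
structure Grid (M : ℕ) (m : ℤ) (s : ℕ → ℕ → ℕ) : Prop extends Single M m s where
  cross : ∀ a b, b < a → a ≤ M + 1 → up M s a + low M s b + s 2 (M + 1) ≤ 2 * m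

/-- All Dyck path inequalities on three rows; `total` is the double path filling rows 1 and 2. -/
structure Feasible (M : ℕ) (m : ℤ) (s : ℕ → ℕ → ℕ) : Prop extends Grid M m s where
  total : psum (s 1) (M + 3) + psum (s 2) (M + 2) ≤ 2 * m

/-- `s` is a sum of two members of the family `P`, of levels `j` and `m - j`. -/
def SplitsAt (P : ℤ → (ℕ → ℕ → ℕ) → Prop) (m j : ℤ) (s : ℕ → ℕ → ℕ) : Prop :=
  ∃ t u, s = t + u ∧ P j t ∧ P (m - j) u

theorem SplitsAt.exchange {P : ℤ → (ℕ → ℕ → ℕ) → Prop} {p c : ℕ} {r δ : ℕ → ℕ → ℕ} {m j : ℤ}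
    (hP : ∀ k t, P k (t + unit p c) → P k (t + δ)) (h : SplitsAt P m j (r + unit p c)) :
    SplitsAt P m j (r + δ) := by
  obtain ⟨t, u, hs, ht, hu⟩ := h
  have hpos : 1 ≤ t p c + u p c := by
    have := congrFun (congrFun hs p) c
    simp only [Pi.add_apply, entry_apply, if_pos, and_self] at this
    omega
  rcases Nat.eq_zero_or_pos (t p c) with h0 | h0
  · obtain ⟨u, rfl⟩ := exists_add_of_le (unit_le_iff.2 (by omega : 1 ≤ u p c))
    rw [add_comm (unit p c)] at hs hu
    rw [← add_assoc] at hs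
    exact ⟨t, u + δ, by rw [add_right_cancel hs, add_assoc], ht, hP _ _ hu⟩
  · obtain ⟨t, rfl⟩ := exists_add_of_le (unit_le_iff.2 h0)
    rw [add_comm (unit p c)] at hs ht
    rw [add_right_comm] at hs
    exact ⟨t + δ, u, by rw [add_right_cancel hs, add_right_comm], hP _ _ ht, hu⟩

end Polytopes

section CommonRoots

variable {M c : ℕ} {m : ℤ} {r s : ℕ → ℕ → ℕ}

/-- The early path with turns `a` and `b` is saturated at level `m`. -/
def TightEarly (M : ℕ) (m : ℤ) (s : ℕ → ℕ → ℕ) (a b : ℕ) : Prop :=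
  a ≤ b ∧ b < M ∧ m + psum (s 2) (M + 1) + s 3 M ≤ up M s a + low M s b

/-- The late path with turns `a` and `b` is saturated at level `m`. -/
def TightLate (M : ℕ) (m : ℤ) (s : ℕ → ℕ → ℕ) (a b : ℕ) : Prop :=
  1 ≤ a ∧ a ≤ b ∧ b ≤ M ∧ m + psum (s 2) (M + 1) + s 1 0 ≤ up M s a + low M s b

/-- Some single path with turns `a` and `b` is saturated at level `m`. -/
def Tight (M : ℕ) (m : ℤ) (s : ℕ → ℕ → ℕ) (a b : ℕ) : Prop :=
  TightEarly M m s a b ∨ TightLate M m s a b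

/-- The double path with turns `a` and `b` is saturated at level `m`. -/
def TightCross (M : ℕ) (m : ℤ) (s : ℕ → ℕ → ℕ) (a b : ℕ) : Prop :=
  b < a ∧ a ≤ M + 1 ∧ 2 * m ≤ up M s a + low M s b + s 2 (M + 1)

theorem Grid.of_add_unit_one_zero (h : Grid M m (r + unit 1 0)) :
    Grid M m (r + unit 2 (M + 1)) where
  early a b hab hb := by grind [h.early a b hab hb]
  late a b ha hab hb := by grind [h.late a b ha hab hb]
  cross a b hba ha := by grind [h.cross a b hba ha]

theorem Grid.of_add_unit_three_self (h : Grid M m (r + unit 3 M)) :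
    Grid M m (r + unit 2 (M + 1)) where
  early a b hab hb := by grind [h.early a b hab hb]
  late a b ha hab hb := by grind [h.late a b ha hab hb]
  cross a b hba ha := by grind [h.cross a b hba ha]

theorem Grid.add_unit_one_zero (h : Grid M m (r + unit 2 (M + 1)))
    (hE : ∀ a b, ¬ TightEarly M m (r + unit 2 (M + 1)) a b) : Grid M m (r + unit 1 0) where
  early a b hab hb := by grind [hE a b, TightEarly]
  late a b ha hab hb := by grind [h.late a b ha hab hb]
  cross a b hba ha := by grind [h.cross a b hba ha]

theorem Grid.add_unit_three_self (h : Grid M m (r + unit 2 (M + 1)))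
    (hL : ∀ a b, ¬ TightLate M m (r + unit 2 (M + 1)) a b) : Grid M m (r + unit 3 M) where
  early a b hab hb := by grind [h.early a b hab hb]
  late a b ha hab hb := by grind [hL a b, TightLate]
  cross a b hba ha := by grind [h.cross a b hba ha]

theorem Grid.unit_add_unit_one : Grid M 1 (unit 2 (M + 1) + unit 1 c) where
  early a b hab hb := by grind
  late a b _ hab hb := by grind
  cross a b hba ha := by grind

theorem Grid.unit_add_unit_two (hc : c ≤ M) : Grid M 1 (unit 2 (M + 1) + unit 2 c) where
  early a b hab hb := by grind
  late a b _ hab hb := by grind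
  cross a b hba ha := by grind

theorem Grid.unit_add_unit_three (hc : c ≤ M) : Grid M 1 (unit 2 (M + 1) + unit 3 c) where
  early a b hab hb := by grind
  late a b _ hab hb := by grind
  cross a b hba ha := by grind

theorem Grid.sub_one_of_row_one (h : Grid M m (unit 2 (M + 1) + unit 1 c + r)) (hc : 1 ≤ c)
    (hT : ∀ a b, Tight M m (unit 2 (M + 1) + unit 1 c + r) a b → c ≤ a)
    (hC : ∀ a b, TightCross M m (unit 2 (M + 1) + unit 1 c + r) a b → c ≤ a) :
    Grid M (m - 1) r where
  early a b hab hb := by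
    by_contra! hlt
    have := hT a b (.inl ⟨hab, hb, by grind⟩)
    grind [h.early a b hab hb]
  late a b ha hab hb := by
    by_contra! hlt
    have := hT a b (.inr ⟨ha, hab, hb, by grind⟩)
    grind [h.late a b ha hab hb]
  cross a b hba ha := by
    by_contra! hlt
    have := hC a b ⟨hba, ha, by grind⟩
    grind [h.cross a b hba ha]

theorem Grid.sub_one_of_row_two (h : Grid M m (unit 2 (M + 1) + unit 2 c + r)) (hc : c ≤ M)
    (hT₁ : ∀ a b, Tight M m (unit 2 (M + 1) + unit 2 c + r) a b → a ≤ c)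
    (hT₂ : ∀ a b, Tight M m (unit 2 (M + 1) + unit 2 c + r) a b → c ≤ b)
    (hC : ∀ a b, TightCross M m (unit 2 (M + 1) + unit 2 c + r) a b → c < a → c ≤ b) :
    Grid M (m - 1) r where
  early a b hab hb := by
    by_contra! hlt
    have := hT₁ a b (.inl ⟨hab, hb, by grind⟩)
    have := hT₂ a b (.inl ⟨hab, hb, by grind⟩)
    grind [h.early a b hab hb]
  late a b ha hab hb := by
    by_contra! hlt
    have := hT₁ a b (.inr ⟨ha, hab, hb, by grind⟩)
    have := hT₂ a b (.inr ⟨ha, hab, hb, by grind⟩)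
    grind [h.late a b ha hab hb]
  cross a b hba ha := by
    by_contra! hlt
    have := hC a b ⟨hba, ha, by grind⟩
    grind [h.cross a b hba ha]

theorem Grid.sub_one_of_row_three (h : Grid M m (unit 2 (M + 1) + unit 3 c + r)) (hc : c < M)
    (hT : ∀ a b, Tight M m (unit 2 (M + 1) + unit 3 c + r) a b → b ≤ c)
    (hC : ∀ a b, TightCross M m (unit 2 (M + 1) + unit 3 c + r) a b → b ≤ c) :
    Grid M (m - 1) r where
  early a b hab hb := by
    by_contra! hlt
    have := hT a b (.inl ⟨hab, hb, by grind⟩)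
    grind [h.early a b hab hb]
  late a b ha hab hb := by
    by_contra! hlt
    have := hT a b (.inr ⟨ha, hab, hb, by grind⟩)
    grind [h.late a b ha hab hb]
  cross a b hba ha := by
    by_contra! hlt
    have := hC a b ⟨hba, ha, by grind⟩
    grind [h.cross a b hba ha]

theorem Grid.splitsAt_one_of_row_one (h : Grid M m s) (hw : 0 < s 2 (M + 1)) (hc : 1 ≤ c)
    (hx : 0 < s 1 c) (hT : ∀ a b, Tight M m s a b → c ≤ a)
    (hC : ∀ a b, TightCross M m s a b → c ≤ a) : SplitsAt (Grid M) m 1 s := by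
  obtain ⟨r, rfl⟩ := exists_add_of_le (a := unit 2 (M + 1) + unit 1 c) (b := s)
    fun p d => by grind
  exact ⟨_, r, rfl, .unit_add_unit_one, h.sub_one_of_row_one hc hT hC⟩

theorem Grid.splitsAt_one_of_row_two (h : Grid M m s) (hw : 0 < s 2 (M + 1)) (hc : c ≤ M)
    (hy : 0 < s 2 c) (hT₁ : ∀ a b, Tight M m s a b → a ≤ c) (hT₂ : ∀ a b, Tight M m s a b → c ≤ b)
    (hC : ∀ a b, TightCross M m s a b → c < a → c ≤ b) : SplitsAt (Grid M) m 1 s := by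
  obtain ⟨r, rfl⟩ := exists_add_of_le (a := unit 2 (M + 1) + unit 2 c) (b := s)
    fun p d => by grind
  exact ⟨_, r, rfl, .unit_add_unit_two hc, h.sub_one_of_row_two hc hT₁ hT₂ hC⟩

theorem Grid.splitsAt_one_of_row_three (h : Grid M m s) (hw : 0 < s 2 (M + 1)) (hc : c < M)
    (hz : 0 < s 3 c) (hT : ∀ a b, Tight M m s a b → b ≤ c)
    (hC : ∀ a b, TightCross M m s a b → b ≤ c) : SplitsAt (Grid M) m 1 s := by
  obtain ⟨r, rfl⟩ := exists_add_of_le (a := unit 2 (M + 1) + unit 3 c) (b := s)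
    fun p d => by grind
  exact ⟨_, r, rfl, .unit_add_unit_three hc.le, h.sub_one_of_row_three hc hT hC⟩

end CommonRoots

section TightPaths

variable {M a b a' b' c : ℕ} {m : ℤ} {s : ℕ → ℕ → ℕ}

theorem Tight.bounds (h : Tight M m s a b) :
    a ≤ b ∧ b ≤ M ∧ m + psum (s 2) (M + 1) + (min (s 1 0) (s 3 M) : ℕ) ≤ up M s a + low M s b := by
  rcases h with ⟨hab, hb, h⟩ | ⟨_, hab, hb, h⟩ <;> omega

/-- If the double path with turns `(a, b)`, `a < c`, were saturated, exchanging turns with a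
saturated early path would overload a path. -/
theorem Grid.le_of_tightCross_of_forall_le (h : Grid M m s)
    (hE : ∃ a b, TightEarly M m s a b) (hc : ∀ a b, Tight M m s a b → c ≤ a)
    (hC : TightCross M m s a b) : c ≤ a := by
  by_contra! hac
  obtain ⟨a₁, b₁, hab₁, hb₁, hT⟩ := hE
  have hca : c ≤ a₁ := hc a₁ b₁ (.inl ⟨hab₁, hb₁, hT⟩)
  have hslack : ¬ TightEarly M m s a b₁ := fun hT' => absurd (hc a b₁ (.inl hT')) (by omega)
  obtain ⟨hba, -, hC⟩ := hC
  have := h.cross a₁ b (by omega) (by omega)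
  exact hslack ⟨by omega, hb₁, by omega⟩

theorem Grid.le_of_tightCross_of_forall_ge (h : Grid M m s)
    (hL : ∃ a b, TightLate M m s a b) (hc : ∀ a b, Tight M m s a b → b ≤ c)
    (hC : TightCross M m s a b) : b ≤ c := by
  by_contra! hcb
  obtain ⟨a₁, b₁, ha₁, hab₁, hb₁, hT⟩ := hL
  have hbc : b₁ ≤ c := hc a₁ b₁ (.inr ⟨ha₁, hab₁, hb₁, hT⟩)
  have hslack : ¬ TightLate M m s a₁ b := fun hT' => absurd (hc a₁ b (.inr hT')) (by omega)
  obtain ⟨hba, ha, hC⟩ := hC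
  have := h.cross a b₁ (by omega) ha
  exact hslack ⟨ha₁, by omega, by omega, by omega⟩

theorem Grid.le_rows_of_first_turn (h : Grid M m s) (hE : ∃ a b, TightEarly M m s a b)
    (ha : 1 ≤ a) (hmin : ∀ a' b', Tight M m s a' b' → a ≤ a') (hT : Tight M m s a b)
    (hx : up M s a ≤ up M s 0) :
    m ≤ psum (s 2) (M + 1) + s 1 0 ∧ m ≤ psum (s 2) (M + 1) + s 3 M := by
  obtain ⟨a₁, b₁, hab₁, hb₁, hT₁⟩ := hE
  have ha₁ := hmin a₁ b₁ (.inl ⟨hab₁, hb₁, hT₁⟩)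
  have := h.late a₁ b₁ (by omega) hab₁ (by omega)
  have hle := hT.bounds
  have hslack : ¬ TightEarly M m s 0 b := fun h₀ => absurd (hmin 0 b (.inl h₀)) (by omega)
  obtain rfl : b = M := by
    by_contra hbM
    exact hslack ⟨b.zero_le, by omega, by omega⟩
  have := low_self b s
  have := up_zero b s
  rcases hT with ⟨-, hb, -⟩ | ⟨-, -, -, hT⟩ <;> omega

theorem Grid.le_rows_of_last_turn (h : Grid M m s) (hL : ∃ a b, TightLate M m s a b)
    (hb : b < M) (hmax : ∀ a' b', Tight M m s a' b' → b' ≤ b) (hT : Tight M m s a b)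
    (hz : low M s b ≤ low M s M) :
    m ≤ psum (s 2) (M + 1) + s 1 0 ∧ m ≤ psum (s 2) (M + 1) + s 3 M := by
  obtain ⟨a₁, b₁, ha₁, hab₁, hb₁, hT₁⟩ := hL
  have hbb := hmax a₁ b₁ (.inr ⟨ha₁, hab₁, hb₁, hT₁⟩)
  have := h.early a₁ b₁ hab₁ (by omega)
  have hle := hT.bounds
  have hslack : ¬ TightLate M m s a M := fun h₀ => absurd (hmax a M (.inr h₀)) (by omega)
  obtain rfl : a = 0 := by
    by_contra ha
    exact hslack ⟨by omega, by omega, le_rfl, by omega⟩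
  have := low_self M s
  have := up_zero M s
  rcases hT with ⟨-, -, hT⟩ | ⟨ha, -⟩ <;> omega

theorem Grid.le_rows_of_extreme_turns (h : Grid M m s) (hw : 0 < s 2 (M + 1))
    (h₀ : Tight M m s 0 b) (hM : Tight M m s a M) :
    m ≤ psum (s 2) (M + 1) + s 1 0 ∧ m ≤ psum (s 2) (M + 1) + s 3 M := by
  rcases h₀ with ⟨-, hb, h₀⟩ | ⟨ha, -⟩
  · rcases hM with ⟨-, ha, -⟩ | ⟨ha, haM, -, hM⟩
    · omega
    · rw [low_self] at hM
      rw [up_zero] at h₀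
      rcases lt_or_ge b a with hba | hab
      · have := h.cross a b hba (by omega)
        omega
      · have := h.early a b hab hb
        have := h.late a b ha hab hb.le
        omega
  · omega

/-- Either some root of row 1 or row 3 lies on all saturated paths, or the outer rows vanish before
the first and after the last turn, which makes row 2 together with either corner large. -/
theorem Grid.splitsAt_one_or_le_rows (h : Grid M m s) (hw : 0 < s 2 (M + 1))
    (hE : ∃ a b, TightEarly M m s a b) (hL : ∃ a b, TightLate M m s a b) :
    SplitsAt (Grid M) m 1 s ∨
      m ≤ psum (s 2) (M + 1) + s 1 0 ∧ m ≤ psum (s 2) (M + 1) + s 3 M := by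
  have hne : ∃ a b, Tight M m s a b := let ⟨a, b, hT⟩ := hE; ⟨a, b, .inl hT⟩
  obtain ⟨a, ⟨b₁, ha⟩, hmin⟩ : ∃ a, IsLeast {a | ∃ b, Tight M m s a b} a :=
    ⟨_, Nat.sInf_mem hne, fun _ => Nat.sInf_le⟩
  obtain ⟨b, ⟨a₁, hb⟩, hmax⟩ : ∃ b, IsGreatest {b | ∃ a, Tight M m s a b} b :=
    BddAbove.exists_isGreatest_of_nonempty ⟨M, fun b ⟨a, hT⟩ => hT.bounds.2.1⟩
      (let ⟨a, b, hT⟩ := hne; ⟨b, a, hT⟩)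
  replace hmin a' b' (hT : Tight M m s a' b') : a ≤ a' := hmin ⟨b', hT⟩
  replace hmax a' b' (hT : Tight M m s a' b') : b' ≤ b := hmax ⟨a', hT⟩
  refine or_iff_not_imp_left.2 fun hsplit => ?_
  have hx c (hc : 0 < c) (hca : c ≤ a) : s 1 c = 0 := by
    by_contra hxc
    have hT a' b' (hT : Tight M m s a' b') := hca.trans (hmin a' b' hT)
    exact hsplit (h.splitsAt_one_of_row_one hw hc (by omega) hT
      fun _ _ => h.le_of_tightCross_of_forall_le hE hT)
  have hz c (hc : b ≤ c) (hcM : c < M) : s 3 c = 0 := by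
    by_contra hzc
    have hT a' b' (hT : Tight M m s a' b') := (hmax a' b' hT).trans hc
    exact hsplit (h.splitsAt_one_of_row_three hw hcM (by omega) hT
      fun _ _ => h.le_of_tightCross_of_forall_ge hL hT)
  rcases Nat.eq_zero_or_pos a with rfl | ha₀
  · rcases hb.bounds.2.1.eq_or_lt with rfl | hbM
    · exact h.le_rows_of_extreme_turns hw ha hb
    · exact h.le_rows_of_last_turn hL hbM hmax hb (low_le_low_of_row_three_eq_zero hbM.le hz)
  · exact h.le_rows_of_first_turn hE ha₀ hmin ha (up_le_up_of_row_one_eq_zero ha₀.le hx)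

theorem Grid.two_mul_lt_of_tight (h : Grid M m s) (hw : 0 < s 2 (M + 1))
    (hx : m ≤ psum (s 2) (M + 1) + s 1 0) (hz : m ≤ psum (s 2) (M + 1) + s 3 M)
    (hT : Tight M m s a b) (hT' : Tight M m s a' b') :
    2 * m < up M s a + low M s b' + s 2 (M + 1) := by
  rcases lt_or_ge b a' with hba | hab
  · have := h.cross a' b hba (by have := hT'.bounds; omega)
    have := hT.bounds
    have := hT'.bounds
    omega
  · have hE := h.early a' b hab
    have hL := h.late a' b
    have h₀ := up_zero M s
    have hM := low_self M s
    rcases hT with ⟨-, hb, hT⟩ | ⟨-, -, hb, hT⟩ <;>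
      rcases hT' with ⟨-, -, hT'⟩ | ⟨ha, -, -, hT'⟩ <;>
      rcases Nat.eq_zero_or_pos a' with rfl | ha' <;>
      rcases (show b ≤ M by omega).eq_or_lt with rfl | hbM <;> omega

/-- Row 2 vanishes between the last possible first turn `a` and `c`, so a saturated double path
avoiding `c` could be rerouted through a single path with a later first turn. -/
theorem Grid.le_of_tightCross_of_row_two_eq_zero (h : Grid M m s) (ha : 1 ≤ a)
    (hT : Tight M m s a b) (hab : 2 * m < up M s a + low M s b + s 2 (M + 1))
    (hmax : ∀ a' b', Tight M m s a' b' → a' ≤ a) (hac : a ≤ c)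
    (hy : ∀ d, a ≤ d → d < c → s 2 d = 0) (hC : TightCross M m s a' b') (hca : c < a') :
    c ≤ b' := by
  by_contra! hbc
  obtain ⟨hba, ha', hC⟩ := hC
  have hcross : up M s a + low M s b' + s 2 (M + 1) ≤ 2 * m := by
    rcases lt_or_ge b' a with hlt | hge
    · exact h.cross a b' hlt (by omega)
    · have hlow : low M s b' ≤ low M s (a - 1) :=
        low_le_low_of_row_two_eq_zero (by omega) fun d hd hdb => hy d (by omega) (by omega)
      have := h.cross a (a - 1) (by omega) (by omega)
      omega
  rcases le_or_gt a' b with hle | hlt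
  · have hT' : Tight M m s a' b := by
      rcases hT with ⟨-, hb, hT⟩ | ⟨-, -, hb, hT⟩
      · exact .inl ⟨hle, hb, by omega⟩
      · exact .inr ⟨by omega, hle, hb, by omega⟩
    exact absurd (hmax a' b hT') (by omega)
  · have := h.cross a' b hlt ha'
    omega

theorem Grid.splitsAt_one_of_le_rows (h : Grid M m s) (hw : 0 < s 2 (M + 1))
    (hL : ∃ a b, TightLate M m s a b) (hx : m ≤ psum (s 2) (M + 1) + s 1 0)
    (hz : m ≤ psum (s 2) (M + 1) + s 3 M) : SplitsAt (Grid M) m 1 s := by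
  obtain ⟨a₀, b₀, hL⟩ := hL
  obtain ⟨a, ⟨b₁, ha⟩, hmax⟩ : ∃ a, IsGreatest {a | ∃ b, Tight M m s a b} a :=
    BddAbove.exists_isGreatest_of_nonempty
      ⟨M, fun a ⟨b, hT⟩ => hT.bounds.1.trans hT.bounds.2.1⟩ ⟨a₀, b₀, .inr hL⟩
  obtain ⟨b, ⟨a₁, hb⟩, hmin⟩ : ∃ b, IsLeast {b | ∃ a, Tight M m s a b} b :=
    ⟨_, Nat.sInf_mem ⟨b₀, a₀, .inr hL⟩, fun _ => Nat.sInf_le⟩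
  replace hmax a' b' (hT : Tight M m s a' b') : a' ≤ a := hmax ⟨b', hT⟩
  replace hmin a' b' (hT : Tight M m s a' b') : b ≤ b' := hmin ⟨a', hT⟩
  have ha₁ : 1 ≤ a := hL.1.trans (hmax a₀ b₀ (.inr hL))
  have hlt : 2 * m < up M s a + low M s b + s 2 (M + 1) := h.two_mul_lt_of_tight hw hx hz ha hb
  have hM := ha.bounds
  have hbM := hb.bounds.2.1
  have hab : a ≤ b := by
    by_contra! hba
    have := h.cross a b hba (by omega)
    omega
  have hy : ∃ c, a ≤ c ∧ c ≤ b ∧ s 2 c ≠ 0 := by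
    by_contra! hy
    have hup : up M s a ≤ up M s (b + 1) :=
      up_le_up_of_row_two_eq_zero (by omega) fun c hac hcb => hy c hac (by omega)
    have := h.cross (b + 1) b (by omega) (by omega)
    omega
  obtain ⟨c, ⟨hac, hcb, hc⟩, hcmin⟩ : ∃ c, IsLeast {c | a ≤ c ∧ c ≤ b ∧ s 2 c ≠ 0} c :=
    ⟨_, Nat.sInf_mem hy, fun _ => Nat.sInf_le⟩
  have hzero d (had : a ≤ d) (hdc : d < c) : s 2 d = 0 := by
    by_contra hd
    exact absurd (hcmin ⟨had, by omega, hd⟩) (by omega)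
  exact h.splitsAt_one_of_row_two hw (by omega) (by omega)
    (fun a' b' hT => (hmax a' b' hT).trans hac) (fun a' b' hT => hcb.trans (hmin a' b' hT))
    fun _ _ => h.le_of_tightCross_of_row_two_eq_zero ha₁ ha
      (h.two_mul_lt_of_tight hw hx hz ha ha) hmax hac hzero

theorem Grid.splitsAt_one_of_tight (h : Grid M m s) (hw : 0 < s 2 (M + 1))
    (hE : ∃ a b, TightEarly M m s a b) (hL : ∃ a b, TightLate M m s a b) :
    SplitsAt (Grid M) m 1 s :=
  (h.splitsAt_one_or_le_rows hw hE hL).elim id fun ⟨hx, hz⟩ =>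
    h.splitsAt_one_of_le_rows hw hL hx hz

/-- Without a saturated early (late) path, a unit of `α_{2,i+M+1}` may be traded for one of the
corner `α_{1,i}` (`α_{3,i+M}`), and traded back in the summands. -/
theorem Grid.exists_splitsAt_of_base
    (hbase : ∀ r, r 2 (M + 1) = 0 → Grid M m r → ∃ j, (j = 1 ∨ j = 2) ∧ SplitsAt (Grid M) m j r)
    (h : Grid M m s) : ∃ j, (j = 1 ∨ j = 2) ∧ SplitsAt (Grid M) m j s := by
  induction hw : s 2 (M + 1) generalizing s with
  | zero => exact hbase s hw h
  | succ w ih =>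
    by_cases hE : ∃ a b, TightEarly M m s a b
    · by_cases hL : ∃ a b, TightLate M m s a b
      · exact ⟨1, .inl rfl, h.splitsAt_one_of_tight (by omega) hE hL⟩
      · push Not at hL
        obtain ⟨r, rfl⟩ := exists_add_of_le (unit_le_iff.2 (by omega : 1 ≤ s 2 (M + 1)))
        rw [add_comm] at h hw hL ⊢
        obtain ⟨j, hj, hs⟩ := ih (h.add_unit_three_self hL) (by grind)
        exact ⟨j, hj, hs.exchange fun _ _ => Grid.of_add_unit_three_self⟩
    · push Not at hE
      obtain ⟨r, rfl⟩ := exists_add_of_le (unit_le_iff.2 (by omega : 1 ≤ s 2 (M + 1)))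
      rw [add_comm] at h hw hE ⊢
      obtain ⟨j, hj, hs⟩ := ih (h.add_unit_one_zero hE) (by grind)
      exact ⟨j, hj, hs.exchange fun _ _ => Grid.of_add_unit_one_zero⟩

end TightPaths

section Potentials

/-- Potentials `f`, `g`, `h` on rows 1, 2, 3 certifying the single Dyck path inequalities at level
`m`: each step of a path raises the potential by at least the multiplicity it collects. The constant
`0` in `row_one` is the potential of the paths starting in column `1`, and `column_zero` closes up
the paths starting in column `0`. -/
structure IsPotential (M : ℕ) (m : ℤ) (s : ℕ → ℕ → ℕ) (f g h : ℕ → ℤ) : Prop where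
  column_zero : s 1 0 + h M ≤ m + f 0
  row_one : ∀ c, s 1 (c + 1) + max 0 (f c) ≤ f (c + 1)
  row_two : ∀ c, s 2 c + max (g c) (f c) ≤ g (c + 1)
  row_three : ∀ c, s 3 c + max (h c) (g (c + 1)) ≤ h (c + 1)
  le_level : h (M + 1) ≤ m

namespace IsPotential

variable {M a b c : ℕ} {m : ℤ} {s : ℕ → ℕ → ℕ} {f g h : ℕ → ℤ}

theorem psum_one_le_sub (hp : IsPotential M m s f g h) (a : ℕ) :
    psum (s 1) (a + 1) - s 1 0 ≤ f a - f 0 := by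
  induction a with
  | zero => simp [psum]
  | succ a ih =>
    have := hp.row_one a
    rw [psum_succ]
    omega

theorem psum_one_le (hp : IsPotential M m s f g h) (ha : 1 ≤ a) :
    psum (s 1) (a + 1) - s 1 0 ≤ f a := by
  induction a, ha using Nat.le_induction with
  | base =>
    have := hp.row_one 0
    rw [psum_succ, psum_succ, psum_zero, zero_add] at *
    omega
  | succ a _ ih =>
    have := hp.row_one a
    rw [psum_succ]
    omega

theorem psum_two_le_sub_first (hp : IsPotential M m s f g h) (b : ℕ) :
    psum (s 2) b ≤ g b - g 0 := by
  induction b with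
  | zero => simp [psum]
  | succ b ih =>
    have := hp.row_two b
    rw [psum_succ]
    omega

theorem psum_two_le_sub (hp : IsPotential M m s f g h) (hab : a ≤ b) :
    psum (s 2) (b + 1) - psum (s 2) a ≤ g (b + 1) - f a := by
  induction b, hab using Nat.le_induction with
  | base =>
    have := hp.row_two a
    rw [psum_succ]
    omega
  | succ b _ ih =>
    have := hp.row_two (b + 1)
    rw [psum_succ]
    omega

theorem psum_three_le_sub (hp : IsPotential M m s f g h) (hbc : b ≤ c) :
    psum (s 3) (c + 1) - psum (s 3) b ≤ h (c + 1) - g (b + 1) := by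
  induction c, hbc using Nat.le_induction with
  | base =>
    have := hp.row_three b
    rw [psum_succ]
    omega
  | succ c _ ih =>
    have := hp.row_three (c + 1)
    rw [psum_succ]
    omega

theorem single (hp : IsPotential M m s f g h) : Single M m s where
  early a b hab hb := by
    obtain ⟨N, rfl⟩ : ∃ N, M = N + 1 := ⟨M - 1, by omega⟩
    have hx := hp.psum_one_le_sub a
    have hy := hp.psum_two_le_sub hab
    have hz := hp.psum_three_le_sub (by omega : b ≤ N)
    have := hp.column_zero
    rw [up, low, psum_succ (s 3)]
    omega
  late a b ha hab hb := by
    have hx := hp.psum_one_le ha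
    have hy := hp.psum_two_le_sub hab
    have hz := hp.psum_three_le_sub hb
    have := hp.le_level
    rw [up, low]
    omega

theorem low_le (hp : IsPotential M m s f g h) (hb : b ≤ M) : low M s b ≤ h (M + 1) - g 0 := by
  have hy := hp.psum_two_le_sub_first (b + 1)
  have hz := hp.psum_three_le_sub hb
  rw [low]
  omega

end IsPotential

theorem exists_add_of_add_le {R₁ R₂ : ℤ → ℤ} (h₁ : Monotone R₁) (h₂ : Monotone R₂)
    (hR : ∀ r, R₁ r + R₂ r = r) {n : ℕ} {p q : ℤ} (h : n + p ≤ q) :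
    ∃ a b : ℕ, n = a + b ∧ a + R₁ p ≤ R₁ q ∧ b + R₂ p ≤ R₂ q := by
  have hp := hR p
  have hq := hR q
  have h₁ := h₁ (by omega : p ≤ q)
  have h₂ := h₂ (by omega : p ≤ q)
  exact ⟨min n (R₁ q - R₁ p).toNat, n - min n (R₁ q - R₁ p).toNat, by omega, by omega, by omega⟩

/-- Rounding the potentials rounds the multiplicities. -/
theorem IsPotential.exists_add {M : ℕ} {m j : ℤ} {s : ℕ → ℕ → ℕ} {f g h : ℕ → ℤ} {R₁ R₂ : ℤ → ℤ}
    (hp : IsPotential M m s f g h) (h₁ : Monotone R₁) (h₂ : Monotone R₂)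
    (hR : ∀ r, R₁ r + R₂ r = r) (h0 : R₁ 0 = 0) (hm : ∀ r, R₁ (m + r) = j + R₁ r) :
    ∃ t u, s = t + u ∧ IsPotential M j t (R₁ ∘ f) (R₁ ∘ g) (R₁ ∘ h) ∧
      IsPotential M (m - j) u (R₂ ∘ f) (R₂ ∘ g) (R₂ ∘ h) := by
  have h0' : R₂ 0 = 0 := by have := hR 0; omega
  have hm' (r : ℤ) : R₂ (m + r) = m - j + R₂ r := by
    have := hR r; have := hR (m + r); have := hm r; omega
  have hl₁ : R₁ (h (M + 1)) ≤ j := (h₁ hp.le_level).trans_eq (by simpa [h0] using hm 0)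
  have hl₂ : R₂ (h (M + 1)) ≤ m - j := (h₂ hp.le_level).trans_eq (by simpa [h0'] using hm' 0)
  obtain ⟨d, d', hd, hd₁, hd₂⟩ := exists_add_of_add_le h₁ h₂ hR hp.column_zero
  choose x x' hx hx₁ hx₂ using fun c => exists_add_of_add_le h₁ h₂ hR (hp.row_one c)
  choose y y' hy hy₁ hy₂ using fun c => exists_add_of_add_le h₁ h₂ hR (hp.row_two c)
  choose z z' hz hz₁ hz₂ using fun c => exists_add_of_add_le h₁ h₂ hR (hp.row_three c)
  simp only [h₁.map_max, h₂.map_max, h0, h0', hm, hm'] at hd₁ hd₂ hx₁ hx₂ hy₁ hy₂ hz₁ hz₂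
  refine ⟨fun | 1 => (Nat.casesOn · d x) | 2 => y | 3 => z | p => s p,
    fun | 1 => (Nat.casesOn · d' x') | 2 => y' | 3 => z' | _ => 0, ?_,
    ⟨hd₁, hx₁, hy₁, hz₁, hl₁⟩, ⟨hd₂, hx₂, hy₂, hz₂, hl₂⟩⟩
  funext p c
  rcases p with _ | _ | _ | _ | p
  · rfl
  · rcases c with _ | c
    · exact hd
    · exact hx c
  · exact hy c
  · exact hz c
  · rfl

/-- The potential along a row that is entered with potential `e c` in column `c`, starts with
potential `k`, and collects `r c` in column `c`. -/
def passage (r : ℕ → ℕ) (e : ℕ → ℤ) (k : ℤ) : ℕ → ℤ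
  | 0 => k
  | c + 1 => r c + max (passage r e k c) (e c)

theorem passage_le {r : ℕ → ℕ} {e : ℕ → ℤ} {k q : ℤ} {c : ℕ} (hk : k + psum r c ≤ q)
    (he : ∀ b < c, e b + psum r c - psum r b ≤ q) : passage r e k c ≤ q := by
  induction c generalizing q with
  | zero => simpa [passage, psum] using hk
  | succ c ih =>
    have hc := he c c.lt_succ_self
    rw [psum_succ] at hk hc
    have := ih (q := q - r c) (by omega) fun b hb => by
      have := he b (by omega)
      rw [psum_succ] at this
      omega
    rw [passage]
    omega

section Canonical

variable (s : ℕ → ℕ → ℕ) (k : ℤ)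

/-- The least potential on row 1 if row 2 starts with potential `k`. -/
def potOne : ℕ → ℤ := passage (fun c => s 1 (c + 1)) 0 (min k 0)

/-- The least potential on row 2 that starts with `k`. -/
def potTwo : ℕ → ℤ := passage (s 2) (potOne s k) k

/-- The least potential on row 3 if row 2 starts with potential `k`. -/
def potThree : ℕ → ℤ := passage (s 3) (fun c => potTwo s k (c + 1)) k

variable {s k} {M c : ℕ} {m q : ℤ}

theorem potOne_le (a : ℕ) : potOne s k a ≤ psum (s 1) (a + 1) - s 1 0 := by
  have h (b : ℕ) : psum (s 1) (b + 1) = s 1 0 + psum (fun c => s 1 (c + 1)) b := by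
    rw [psum, Finset.sum_range_succ', add_comm]
    rfl
  have hn (b : ℕ) := psum_nonneg (fun c => s 1 (c + 1)) b
  rw [h]
  refine passage_le (by omega) fun b _ => ?_
  have := hn b
  simp only [Pi.zero_apply]
  omega

theorem potTwo_le {b : ℕ} (hk : k + psum (s 2) (b + 1) ≤ q)
    (h : ∀ a, 1 ≤ a → a ≤ b →
      psum (s 1) (a + 1) - s 1 0 + psum (s 2) (b + 1) - psum (s 2) a ≤ q) :
    potTwo s k (b + 1) ≤ q := by
  refine passage_le hk fun a ha => ?_
  rcases a with _ | a
  · rw [psum_zero, potOne, passage]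
    omega
  · have := h (a + 1) (by omega) (by omega)
    have := potOne_le (s := s) (k := k) (a + 1)
    omega

theorem potThree_le (hc : 1 ≤ c)
    (hk : ∀ b < c, k + psum (s 2) (b + 1) + psum (s 3) c - psum (s 3) b ≤ q)
    (h : ∀ a b, 1 ≤ a → a ≤ b → b < c → psum (s 1) (a + 1) - s 1 0 + psum (s 2) (b + 1)
      - psum (s 2) a + psum (s 3) c - psum (s 3) b ≤ q) :
    potThree s k c ≤ q := by
  refine passage_le ?_ fun b hb => ?_
  · have := hk 0 hc
    have := psum_nonneg (s 2) 1
    rw [psum_zero, zero_add] at *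
    omega
  · have hb' := hk b hb
    have := potTwo_le (b := b) (s := s) (k := k) (q := q - psum (s 3) c + psum (s 3) b) (by omega)
      fun a ha hab => by have := h a b ha hab hb; omega
    omega

theorem isPotential_passage (h0 : s 1 0 + potThree s k M ≤ m + min k 0)
    (hm : potThree s k (M + 1) ≤ m) :
    IsPotential M m s (potOne s k) (potTwo s k) (potThree s k) where
  column_zero := h0
  row_one c := by simp only [potOne, passage, Pi.zero_apply, max_comm, le_refl]
  row_two _ := le_rfl
  row_three _ := le_rfl
  le_level := hm

theorem potThree_self_le (hM : 1 ≤ M) (hk : ∀ b < M, k + low M s b ≤ q + s 3 M)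
    (h : ∀ a b, 1 ≤ a → a ≤ b → b < M →
      up M s a + low M s b ≤ q + psum (s 2) (M + 1) + s 1 0 + s 3 M) :
    potThree s k M ≤ q := by
  simp only [up, low, psum_succ (s 3) M] at hk h
  exact potThree_le hM (fun b hb => by have := hk b hb; omega)
    fun a b ha hab hb => by have := h a b ha hab hb; omega

theorem potThree_succ_le (hk : ∀ b ≤ M, k + low M s b ≤ q)
    (h : ∀ a b, 1 ≤ a → a ≤ b → b ≤ M → up M s a + low M s b ≤ q + psum (s 2) (M + 1) + s 1 0) :
    potThree s k (M + 1) ≤ q := by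
  simp only [up, low] at hk h
  exact potThree_le M.succ_pos (fun b hb => by have := hk b (by omega); omega)
    fun a b ha hab hb => by have := h a b ha hab (by omega); omega

end Canonical

theorem Single.add_potThree_self_le {M b₀ b₁ : ℕ} {m k : ℤ} {s : ℕ → ℕ → ℕ} (h : Single M m s)
    (hb₁ : b₁ ≤ M) (hb₀ : b₀ < M) (hmax : ∀ b < M, low M s b ≤ low M s b₀)
    (hk : k = min (m - low M s b₁) (m + s 3 M - s 1 0 - low M s b₀)) :
    s 1 0 + potThree s k M ≤ m + min k 0 := by
  have hlow := low_self M s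
  have hup := up_zero M s
  have h₀ := h.early 0 b₀ (by omega) hb₀
  refine le_sub_iff_add_le'.1 (potThree_self_le (by omega) (fun b hb => ?_) fun a b ha hab hb => ?_)
  · have := h.early 0 b (by omega) hb
    have := hmax b hb
    omega
  · have := h.early a b hab hb
    have := h.late a b ha hab (by omega)
    have := h.late a M ha (by omega) le_rfl
    have := h.early 0 b (by omega) hb
    rcases hb₁.eq_or_lt with rfl | hb₁
    · omega
    · have := h.early 0 b₁ (by omega) hb₁
      omega

theorem Single.exists_isPotential {M : ℕ} {m μ : ℤ} {s : ℕ → ℕ → ℕ} (h : Single M m s)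
    (hM : 1 ≤ M) (hμ : IsGreatest (low M s '' Set.Iic M) μ)
    (hpair : ∀ a b, 1 ≤ a → a ≤ M → b < M → up M s a + low M s b ≤ m + μ) :
    ∃ f g h, IsPotential M m s f g h ∧ h (M + 1) - g 0 ≤ μ := by
  obtain ⟨⟨b₁, hb₁, rfl⟩, hmax⟩ := hμ
  have hμ (b : ℕ) (hb : b ≤ M) : low M s b ≤ low M s b₁ := hmax ⟨b, hb, rfl⟩
  obtain ⟨b₀, hb₀, hγ⟩ := (Finset.range M).exists_max_image (low M s) ⟨0, Finset.mem_range.2 hM⟩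
  simp only [Finset.mem_range] at hb₀ hγ
  obtain ⟨k, hk⟩ : ∃ k, k = min (m - low M s b₁) (m + s 3 M - s 1 0 - low M s b₀) := ⟨_, rfl⟩
  refine ⟨_, potTwo s k, _,
    isPotential_passage (k := k) (h.add_potThree_self_le hb₁ hb₀ hγ hk)
      (potThree_succ_le (fun b hb => ?_) h.late),
    sub_le_iff_le_add.2 (potThree_succ_le (fun b hb => ?_) fun a b ha hab hb => ?_)⟩
  · have := hμ b hb
    omega
  · have := hμ b hb
    rw [potTwo, passage]
    omega
  · have := h.late a b ha hab hb
    have := hμ b₀ hb₀.le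
    have := hpair a b₀ ha (by omega) hb₀
    have := low_self M s
    have := h.early 0 b₀ (by omega) hb₀
    have := up_zero M s
    rw [potTwo, passage]
    rcases hb.eq_or_lt with rfl | hb
    · omega
    · have := h.early a b hab hb
      omega

end Potentials

section NoCommonRoot

/-- `s` is a sum of two arrays satisfying the single path inequalities at levels `j` and `m - j`,
such that the heaviest lower strands of the two summands together weigh at most `μ`. -/
def SplitsBelow (M : ℕ) (m j μ : ℤ) (s : ℕ → ℕ → ℕ) : Prop :=
  ∃ t u, s = t + u ∧ Single M j t ∧ Single M (m - j) u ∧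
    ∀ b ≤ M, ∀ b' ≤ M, low M t b + low M u b' ≤ μ

variable {M a b : ℕ} {m j μ : ℤ} {s t : ℕ → ℕ → ℕ}

theorem Single.splitsBelow_one (h : Single M m s) (hM : 1 ≤ M) (hm : 1 ≤ m)
    (hμ : IsGreatest (low M s '' Set.Iic M) μ)
    (hpair : ∀ a b, 1 ≤ a → a ≤ M → b < M → up M s a + low M s b ≤ m + μ) :
    SplitsBelow M m 1 μ s := by
  obtain ⟨f, g, h, hp, hgh⟩ := h.exists_isPotential hM hμ hpair
  have hadd (r : ℤ) : (m + r) / m = 1 + r / m := by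
    rw [add_comm m, add_comm 1]
    simpa using Int.add_mul_ediv_right r 1 (by omega : m ≠ 0)
  have hdiv : Monotone fun r : ℤ => r / m := fun r q hrq => Int.ediv_le_ediv (by omega) hrq
  have hsub : Monotone fun r : ℤ => r - r / m := by
    refine monotone_int_of_le_succ fun r => ?_
    have : (r + 1) / m ≤ (m + r) / m := hdiv (by omega)
    have := hadd r
    omega
  obtain ⟨t, u, rfl, ht, hu⟩ := hp.exists_add hdiv hsub (fun r => by ring) (by simp) hadd
  refine ⟨t, u, rfl, ht.single, hu.single, fun b hb b' hb' => ?_⟩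
  have := ht.low_le hb
  have := hu.low_le hb'
  dsimp only [Function.comp_apply] at *
  omega

/-- The turns `(a, b)` exceed the weight `m + μ`, with `a` and `b` extremal for this property. -/
structure Overloaded (M : ℕ) (m μ : ℤ) (s : ℕ → ℕ → ℕ) (a b : ℕ) : Prop where
  one_le : 1 ≤ a
  left_lt : a < M
  right_lt : b < M
  lt : m + μ < up M s a + low M s b
  up_lt : ∀ k, 1 ≤ k → k < a → up M s k < up M s a
  low_lt : ∀ k, b < k → k < M → low M s k < low M s b

theorem exists_overloaded (hM : 2 ≤ M) (hx : s 1 M = 0) (ha : 1 ≤ a) (haM : a ≤ M) (hb : b < M)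
    (hlt : m + μ < up M s a + low M s b) : ∃ a b, Overloaded M m μ s a b := by
  classical
  have hex : ∃ a, 1 ≤ a ∧ a ≤ M ∧ m + μ < up M s a + low M s b := ⟨a, ha, haM, hlt⟩
  obtain ⟨ha₀, haM₀, hlt₀⟩ := Nat.find_spec hex
  have hmin (k : ℕ) (hk : 1 ≤ k) (hka : k < Nat.find hex) : up M s k < up M s (Nat.find hex) := by
    have := Nat.find_min hex hka
    grind
  obtain ⟨b₀, hb₀, hmax⟩ := ((Finset.range M).filter
    fun c => m + μ < up M s (Nat.find hex) + low M s c).exists_max_image id ⟨b, by simp [hb, hlt₀]⟩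
  simp only [Finset.mem_filter, Finset.mem_range, id] at hb₀ hmax
  refine ⟨Nat.find hex, b₀, ha₀, haM₀.lt_of_ne fun hM' => ?_, hb₀.1, hb₀.2, hmin,
    fun k hk hkM => ?_⟩
  · obtain ⟨N, rfl⟩ : ∃ N, M = N + 1 := ⟨M - 1, by omega⟩
    have := hmin N (by omega) (by omega)
    rw [hM', up_succ] at this
    omega
  · by_contra! hle
    exact absurd (hmax k ⟨hkM, by omega⟩) (by omega)

namespace Overloaded

theorem right_lt_left (ho : Overloaded M m μ s a b) (h : Single M m s) (hM : low M s M ≤ μ) :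
    b < a := by
  by_contra! hab
  have := h.early a b hab ho.right_lt
  have := ho.lt
  rw [low_self] at hM
  omega

theorem level_lt_up (ho : Overloaded M m μ s a b) (hμ : ∀ b ≤ M, low M s b ≤ μ) :
    m < up M s a := by
  have := ho.lt
  have := hμ b ho.right_lt.le
  omega

theorem up_zero_lt (ho : Overloaded M m μ s a b) (h : Single M m s) (hM : low M s M ≤ μ) :
    up M s 0 < up M s a := by
  have := ho.lt
  have := h.early 0 b (by omega) ho.right_lt
  rw [low_self] at hM
  rw [up_zero] at *
  omega

theorem row_pos (ho : Overloaded M m μ s a b) (h : Single M m s)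
    (hμ : ∀ b ≤ M, low M s b ≤ μ) : s 3 M < s 1 0 ∧ 1 ≤ s 1 a ∧ 1 ≤ s 2 M := by
  have hup := ho.level_lt_up hμ
  obtain ⟨N, rfl⟩ : ∃ N, M = N + 1 := ⟨M - 1, by have := ho.left_lt; omega⟩
  obtain ⟨c, rfl⟩ : ∃ c, a = c + 1 := ⟨a - 1, by have := ho.one_le; omega⟩
  have hlow := low_self (N + 1) s
  have hc : up (N + 1) s c < up (N + 1) s (c + 1) := by
    rcases c.eq_zero_or_pos with rfl | hc
    · exact ho.up_zero_lt h (hμ _ le_rfl)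
    · exact ho.up_lt c hc c.lt_succ_self
  have hlate := h.late (c + 1) (N + 1) ho.one_le ho.left_lt.le le_rfl
  have hearly := h.early (c + 1) N (by have := ho.left_lt; omega) N.lt_succ_self
  rw [low_succ] at hlow hlate
  rw [up_succ] at hc
  omega

theorem low_left_lt (ho : Overloaded M m μ s a b) (h : Single M m s) (hM : low M s M ≤ μ) :
    low M s a < low M s b := by
  have := h.early a a le_rfl ho.left_lt
  have := ho.lt
  rw [low_self] at hM
  omega

theorem exists_last_turn (ho : Overloaded M m μ s a b) (h : Single M m s) (hM : low M s M ≤ μ) :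
    ∃ d, b ≤ d ∧ d < a ∧ 1 ≤ s 3 d ∧ ∀ c, d < c → c ≤ a → low M s c ≤ low M s a := by
  classical
  have hex : ∃ c < a, b ≤ c ∧ 1 ≤ s 3 c := by
    by_contra! hz
    have := low_le_low_of_row_three_eq_zero (M := M) (s := s) (ho.right_lt_left h hM).le
      fun c hbc hca => by have := hz c hca hbc; omega
    exact absurd (ho.low_left_lt h hM) (by omega)
  obtain ⟨d, hd, hmax⟩ := ((Finset.range a).filter fun c => b ≤ c ∧ 1 ≤ s 3 c).exists_max_image id
    (hex.imp fun c hc => by simpa using hc)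
  simp only [Finset.mem_filter, Finset.mem_range, id] at hd hmax
  refine ⟨d, hd.2.1, hd.1, hd.2.2, fun c hdc hca => ?_⟩
  refine low_le_low_of_row_three_eq_zero hca fun c' hcc' hca' => ?_
  by_contra hne
  exact absurd (hmax c' ⟨hca', by omega⟩) (by omega)

theorem early_lt (ho : Overloaded M m μ s a b) (h : Single M m s) {d k c : ℕ} (hbd : b ≤ d)
    (hlow : ∀ c, d < c → c ≤ a → low M s c ≤ low M s a) (hka : k < a) (hdc : d < c) (hkc : k ≤ c)
    (hcM : c < M) : up M s k + low M s c < m + psum (s 2) (M + 1) + s 3 M := by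
  have haM := ho.left_lt
  rcases k.eq_zero_or_pos with rfl | hk
  · have := h.early 0 b (by omega) ho.right_lt
    have := ho.low_lt c (by omega) hcM
    omega
  · have := ho.up_lt k hk hka
    rcases le_total a c with hac | hca
    · have := h.early a c hac hcM
      omega
    · have := h.early a a le_rfl haM
      have := hlow c hdc hca
      omega

end Overloaded

section Quad

/-- The roots `α₁,ᵢ`, `α₁,ᵢ₊ₐ`, `α₃,ᵢ₊d` and `α₂,ᵢ₊M`. They meet every single path at most twice,
and are split off an array with overloaded turns. -/
def quad (M a d : ℕ) : ℕ → ℕ → ℕ := unit 1 0 + unit 1 a + unit 3 d + unit 2 M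

variable {k c d : ℕ} {u : ℕ → ℕ → ℕ}

theorem up_quad (M a d : ℕ) (hk : k ≤ M) : up M (quad M a d) k = 2 + if a ≤ k then 1 else 0 := by
  simp only [quad, up_add, up_entry_one, up_entry_two, up_entry_three]
  grind

theorem low_quad (hdM : d ≤ M) (hc : c ≤ M) :
    low M (quad M a d) c = (if c ≤ d then 1 else 0) + if c = M then 1 else 0 := by
  simp only [quad, low_add, low_entry_one, low_entry_two, low_entry_three]
  grind

theorem psum_quad_two (M a d : ℕ) : psum (quad M a d 2) (M + 1) = 1 := by
  simp [quad, psum_add, psum_entry, -Pi.add_apply]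

theorem quad_one_zero (M d : ℕ) (ha : 1 ≤ a) : quad M a d 1 0 = 1 := by
  simp only [quad, add_apply₂, entry_apply]
  grind

theorem quad_three_self (a : ℕ) (hdM : d < M) : quad M a d 3 M = 0 := by
  simp only [quad, add_apply₂, entry_apply]
  grind

theorem single_two_quad (hda : d < a) (haM : a < M) : Single M 2 (quad M a d) where
  early k c hkc hcM := by
    rw [up_quad _ _ _ (by omega), low_quad (by omega) hcM.le, psum_quad_two,
      quad_three_self _ (by omega)]
    grind
  late k c _ hkc hcM := by
    rw [up_quad _ _ _ (by omega), low_quad (by omega) hcM, psum_quad_two,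
      quad_one_zero _ _ (by omega)]
    grind

theorem Overloaded.single_of_eq_quad_add (ho : Overloaded M m μ s a b) (h : Single M m s)
    (hbd : b ≤ d) (hda : d < a) (hlow : ∀ c, d < c → c ≤ a → low M s c ≤ low M s a)
    (hcorner : s 3 M < s 1 0) (hs : s = quad M a d + u) : Single M (m - 2) u := by
  have ha := ho.one_le
  have haM := ho.left_lt
  have hup {k : ℕ} (hk : k ≤ M) : up M s k = 2 + (if a ≤ k then 1 else 0) + up M u k := by
    rw [hs, up_add, up_quad _ _ _ hk]
  have hlow_eq {c : ℕ} (hc : c ≤ M) :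
      low M s c = (if c ≤ d then 1 else 0) + (if c = M then 1 else 0) + low M u c := by
    rw [hs, low_add, low_quad (hda.trans haM).le hc]
  have hrow : psum (s 2) (M + 1) = 1 + psum (u 2) (M + 1) := by rw [hs, psum_add, psum_quad_two]
  have hx : s 1 0 = 1 + u 1 0 := by rw [hs, add_apply₂, quad_one_zero _ _ ha]
  have hz : s 3 M = u 3 M := by rw [hs, add_apply₂, quad_three_self _ (hda.trans haM), zero_add]
  constructor
  · intro k c hkc hcM
    have := h.early k c hkc hcM
    have : k < a → d < c → _ := fun hka hdc => ho.early_lt h hbd hlow hka hdc hkc hcM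
    have := hup (hkc.trans hcM.le)
    have := hlow_eq hcM.le
    omega
  · intro k c hk hkc hcM
    have := hup (hkc.trans hcM)
    have := hlow_eq hcM
    have := h.late k c hk hkc hcM
    rcases hcM.eq_or_lt with rfl | hcM
    · have := h.late a c ha haM.le le_rfl
      have := ho.up_lt k hk
      omega
    · have := h.early k c hkc hcM
      have : k < a → d < c → _ := fun hka hdc => ho.early_lt h hbd hlow hka hdc hkc hcM
      omega

end Quad

theorem Single.splitsBelow_two (h : Single M m s) (hμ : ∀ b ≤ M, low M s b ≤ μ)
    (ho : Overloaded M m μ s a b) : SplitsBelow M m 2 μ s := by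
  obtain ⟨hx₀, hxa, hyM⟩ := ho.row_pos h hμ
  obtain ⟨d, hbd, hda, hzd, hlow⟩ := ho.exists_last_turn h (hμ M le_rfl)
  have := ho.one_le
  have haM := ho.left_lt
  obtain ⟨u, hs⟩ : ∃ u, s = quad M a d + u := by
    refine exists_add_of_le fun p c => ?_
    simp only [quad, Pi.add_apply, entry_apply]
    grind
  have hu := ho.single_of_eq_quad_add h hbd hda hlow hx₀ hs
  subst hs
  refine ⟨_, u, rfl, single_two_quad hda haM, hu, fun c hc c' hc' => ?_⟩
  have hmax := hμ c' hc'
  have hmax_right := hμ b ho.right_lt.le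
  have hlt := ho.low_lt c'
  simp only [low_add, low_quad (hda.trans haM).le hc', low_quad (hda.trans haM).le hc,
    low_quad (hda.trans haM).le ho.right_lt.le] at hmax hmax_right hlt ⊢
  grind

end NoCommonRoot

section LastColumns

variable {M p c k : ℕ} {m j μ : ℤ} {s t u : ℕ → ℕ → ℕ}

theorem exists_eq_add_entry (p c : ℕ) (s : ℕ → ℕ → ℕ) :
    ∃ r, s = r + entry p c (s p c) ∧ r p c = 0 := by
  refine ⟨fun q a => if q = p ∧ a = c then 0 else s q a, ?_, by simp⟩
  funext q a
  rw [add_apply₂, entry_apply]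
  grind

theorem exists_add_entry_eq_add {x y : ℤ} (hx : 0 ≤ x) (hy : 0 ≤ y) (h : k ≤ x + y) (p c : ℕ)
    (t u : ℕ → ℕ → ℕ) :
    ∃ k₁ k₂ : ℕ, k₁ ≤ x ∧ k₂ ≤ y ∧ t + u + entry p c k = t + entry p c k₁ + (u + entry p c k₂) := by
  refine ⟨min k x.toNat, k - min k x.toNat, by omega, by omega, ?_⟩
  rw [add_add_add_comm, ← entry_add]
  congr
  omega

theorem Single.of_add (h : Single M m (s + entry 1 c k)) (hc : 1 ≤ c) : Single M m s where
  early a b hab hb := by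
    have := h.early a b hab hb
    grind
  late a b ha hab hb := by
    have := h.late a b ha hab hb
    grind

/-- Only the path that runs through all of rows 1 and 3 sees column `M` of row 1. -/
theorem Single.add_last (h : Single M m s)
    (hk : k ≤ m + psum (s 2) (M + 1) + s 1 0 - up M s M - low M s M) :
    Single M m (s + entry 1 M k) where
  early a b hab hb := by
    have := h.early a b hab hb
    grind
  late a b ha hab hb := by
    have := h.late a b ha hab hb
    grind

theorem SplitsBelow.add_last (h : SplitsBelow M m j μ s) (hM : 1 ≤ M)
    (hs : Single M m (s + entry 1 M k)) : SplitsBelow M m j μ (s + entry 1 M k) := by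
  obtain ⟨t, u, rfl, ht, hu, hμ⟩ := h
  have hk := hs.late M M hM le_rfl le_rfl
  have ht' := ht.late M M hM le_rfl le_rfl
  have hu' := hu.late M M hM le_rfl le_rfl
  obtain ⟨k₁, k₂, hk₁, hk₂, heq⟩ := exists_add_entry_eq_add (k := k) (sub_nonneg.2 ht')
    (sub_nonneg.2 hu') (by grind) 1 M t u
  refine ⟨_, _, heq, ht.add_last (by omega), hu.add_last (by omega), fun b hb b' hb' => ?_⟩
  have := hμ b hb b' hb'
  simpa [low_add, low_entry_one]

/-- Two single paths together cover the double path that stops in column `M`. -/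
theorem Single.psum_add_low_le (h : Single M m s) (hM : 1 ≤ M) {b : ℕ} (hb : b ≤ M) :
    psum (s 1) (M + 1) + low M s b ≤ 2 * m := by
  obtain ⟨N, rfl⟩ : ∃ N, M = N + 1 := ⟨M - 1, by omega⟩
  have hlate := h.late (N + 1) (N + 1) hM le_rfl le_rfl
  have hself := low_self (N + 1) s
  have hup := up_zero (N + 1) s
  have hrow := psum_succ (s 2) (N + 1)
  rw [up] at hlate
  rcases hb.eq_or_lt with rfl | hb
  · have := h.early 0 N (by omega) N.lt_succ_self
    rw [low_succ] at *
    omega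
  · have := h.early 0 b (by omega) hb
    omega

theorem Single.grid_add (h : Single M m s) (hw : s 2 (M + 1) = 0)
    (hv : s 1 (M + 1) = 0) (hk : ∀ b ≤ M, psum (s 1) (M + 1) + low M s b + k ≤ 2 * m) :
    Grid M m (s + entry 1 (M + 1) k) where
  early a b hab hb := by
    have := h.early a b hab hb
    grind
  late a b ha hab hb := by
    have := h.late a b ha hab hb
    grind
  cross a b hba ha := by
    rcases ha.eq_or_lt with rfl | ha
    · have := hk b (by omega)
      have : up M s (M + 1) = psum (s 1) (M + 1) := by simp [up, psum_succ (s 1) (M + 1), hv]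
      grind
    · have := h.late a M (by omega) (by omega) le_rfl
      have := h.early 0 b (by omega) (by omega)
      have := low_self M s
      have := up_zero M s
      grind

theorem SplitsBelow.grid (h : SplitsBelow M m j μ s) (hM : 1 ≤ M) (hw : s 2 (M + 1) = 0)
    (hv : s 1 (M + 1) = 0) (hμ : psum (s 1) (M + 1) + μ + k ≤ 2 * m) :
    SplitsAt (Grid M) m j (s + entry 1 (M + 1) k) := by
  obtain ⟨t, u, rfl, ht, hu, hlow⟩ := h
  obtain ⟨b, hb, ht_max⟩ := (Finset.Iic M).exists_max_image (low M t) ⟨0, by simp⟩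
  obtain ⟨b', hb', hu_max⟩ := (Finset.Iic M).exists_max_image (low M u) ⟨0, by simp⟩
  simp only [Finset.mem_Iic] at hb hb' ht_max hu_max
  have := hlow b hb b' hb'
  obtain ⟨hwt, hwu⟩ := Nat.add_eq_zero_iff.1 hw
  obtain ⟨hvt, hvu⟩ := Nat.add_eq_zero_iff.1 hv
  rw [psum_add] at hμ
  obtain ⟨k₁, k₂, hk₁, hk₂, heq⟩ := exists_add_entry_eq_add (k := k)
    (sub_nonneg.2 (ht.psum_add_low_le hM hb)) (sub_nonneg.2 (hu.psum_add_low_le hM hb'))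
    (by omega) 1 (M + 1) t u
  refine ⟨_, _, heq, ht.grid_add hwt hvt fun c hc => ?_, hu.grid_add hwu hvu fun c hc => ?_⟩
  · have := ht_max c hc
    omega
  · have := hu_max c hc
    omega

theorem Grid.feasible_add (h : Grid M m s) (hs : s 1 (M + 2) = 0)
    (hk : psum (s 1) (M + 2) + psum (s 2) (M + 2) + k ≤ 2 * m) :
    Feasible M m (s + entry 1 (M + 2) k) where
  early a b hab hb := by
    have := h.early a b hab hb
    grind
  late a b ha hab hb := by
    have := h.late a b ha hab hb
    grind
  cross a b hba ha := by
    have := h.cross a b hba ha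
    grind
  total := by
    have := psum_succ (s 1) (M + 2)
    grind

theorem Grid.of_add (h : Grid M m (s + entry 1 (M + 2) k)) : Grid M m s where
  early a b hab hb := by
    have := h.early a b hab hb
    grind
  late a b ha hab hb := by
    have := h.late a b ha hab hb
    grind
  cross a b hba ha := by
    have := h.cross a b hba ha
    grind

theorem Grid.psum_add_psum_le (h : Grid M m s) :
    psum (s 1) (M + 2) + psum (s 2) (M + 2) ≤ 2 * m := by
  have := h.cross (M + 1) M M.lt_succ_self le_rfl
  rw [low_self, up, show M + 1 + 1 = M + 2 from rfl] at this
  rw [psum_succ (s 2) (M + 1)]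
  omega

theorem SplitsAt.feasible (h : SplitsAt (Grid M) m j s) (hs : s 1 (M + 2) = 0)
    (hk : Feasible M m (s + entry 1 (M + 2) k)) :
    SplitsAt (Feasible M) m j (s + entry 1 (M + 2) k) := by
  obtain ⟨t, u, rfl, ht, hu⟩ := h
  have htotal := hk.total
  simp only [psum_succ _ (M + 2), psum_add, psum_entry, add_apply₂, entry_apply] at htotal
  obtain ⟨hst, hsu⟩ := Nat.add_eq_zero_iff.1 hs
  obtain ⟨k₁, k₂, hk₁, hk₂, heq⟩ := exists_add_entry_eq_add (k := k)
    (sub_nonneg.2 ht.psum_add_psum_le) (sub_nonneg.2 hu.psum_add_psum_le) (by grind) 1 (M + 2) t u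
  exact ⟨_, _, heq, ht.feasible_add hst (by omega), hu.feasible_add hsu (by omega)⟩

theorem Single.splitsBelow (h : Single M m s) (hM : 2 ≤ M) (hm : 1 ≤ m)
    (hμ : IsGreatest (low M s '' Set.Iic M) μ) :
    SplitsBelow M m 1 μ s ∨ SplitsBelow M m 2 μ s ∧ ∃ c, s 3 c ≠ 0 := by
  obtain ⟨r, hs, hr⟩ := exists_eq_add_entry 1 M s
  generalize s 1 M = k at hs
  subst hs
  have hrS : Single M m r := h.of_add (by omega)
  have hlow : low M (r + entry 1 M k) = low M r := by
    funext b
    simp [low_add, low_entry_one]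
  rw [hlow] at hμ
  by_cases hpair : ∀ a b, 1 ≤ a → a ≤ M → b < M → up M r a + low M r b ≤ m + μ
  · exact .inl ((hrS.splitsBelow_one (by omega) hm hμ hpair).add_last (by omega) h)
  · push Not at hpair
    obtain ⟨a, b, ha, haM, hb, hlt⟩ := hpair
    have hμ' (b : ℕ) (hb : b ≤ M) : low M r b ≤ μ := hμ.2 ⟨b, hb, rfl⟩
    obtain ⟨a, b, ho⟩ := exists_overloaded hM hr ha haM hb hlt
    obtain ⟨d, -, -, hd, -⟩ := ho.exists_last_turn hrS (hμ' M le_rfl)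
    refine .inr ⟨(hrS.splitsBelow_two hμ' ho).add_last (by omega) h, d, ?_⟩
    rw [add_apply₂, entry_apply]
    omega

theorem Grid.exists_splitsAt_of_row_two_eq_zero (h : Grid M m s) (hM : 2 ≤ M) (hm : 1 ≤ m)
    (hw : s 2 (M + 1) = 0) :
    SplitsAt (Grid M) m 1 s ∨ SplitsAt (Grid M) m 2 s ∧ ∃ c, s 3 c ≠ 0 := by
  obtain ⟨r, hs, hr⟩ := exists_eq_add_entry 1 (M + 1) s
  generalize s 1 (M + 1) = k at hs
  subst hs
  have hrS : Single M m r := h.toSingle.of_add (by omega)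
  have hrw : r 2 (M + 1) = 0 := (Nat.add_eq_zero_iff.1 hw).1
  obtain ⟨b, hb, hmax⟩ := (Finset.Iic M).exists_max_image (low M r) ⟨0, by simp⟩
  simp only [Finset.mem_Iic] at hb hmax
  have hμ : IsGreatest (low M r '' Set.Iic M) (low M r b) :=
    ⟨⟨b, hb, rfl⟩, by rintro _ ⟨c, hc, rfl⟩; exact hmax c hc⟩
  have hle : psum (r 1) (M + 1) + low M r b + k ≤ 2 * m := by
    have := h.cross (M + 1) b (by omega) le_rfl
    have : up M r (M + 1) = psum (r 1) (M + 1) := by simp [up, psum_succ (r 1) (M + 1), hr]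
    grind
  refine (hrS.splitsBelow hM hm hμ).imp (fun h => h.grid (by omega) hrw hr hle) ?_
  rintro ⟨h, c, hc⟩
  refine ⟨h.grid (by omega) hrw hr hle, c, ?_⟩
  rw [add_apply₂]
  omega

theorem Single.level_nonneg (h : Single M m s) (hM : 1 ≤ M) : 0 ≤ m := by
  obtain ⟨N, rfl⟩ : ∃ N, M = N + 1 := ⟨M - 1, by omega⟩
  have hearly := h.early 0 N N.zero_le N.lt_succ_self
  have hsucc := low_succ (N + 1) s N
  rw [low_self, psum_succ (s 2) (N + 1)] at hsucc
  have := psum_nonneg (s 2) (N + 1)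
  rw [up_zero] at hearly
  omega

theorem Feasible.exists_splitsAt (h : Feasible M m s) (hM : 2 ≤ M) (hm : 1 ≤ m) :
    ∃ j, (j = 1 ∨ j = 2) ∧ SplitsAt (Feasible M) m j s := by
  obtain ⟨r, hs, hr⟩ := exists_eq_add_entry 1 (M + 2) s
  generalize s 1 (M + 2) = k at hs
  subst hs
  obtain ⟨j, hj, hsplit⟩ := Grid.exists_splitsAt_of_base (fun t hw ht =>
    (ht.exists_splitsAt_of_row_two_eq_zero hM hm hw).elim (fun h => ⟨1, .inl rfl, h⟩)
      fun h => ⟨2, .inr rfl, h.1⟩) h.toGrid.of_add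
  exact ⟨j, hj, hsplit.feasible hr h⟩

theorem Feasible.splitsAt_one (h : Feasible M m s) (hM : 2 ≤ M) (hm : 1 ≤ m)
    (h₂ : s 2 (M + 1) = 0) (h₃ : s 3 = 0) : SplitsAt (Feasible M) m 1 s := by
  obtain ⟨r, hs, hr⟩ := exists_eq_add_entry 1 (M + 2) s
  generalize s 1 (M + 2) = k at hs
  subst hs
  refine SplitsAt.feasible ?_ hr h
  exact (h.toGrid.of_add.exists_splitsAt_of_row_two_eq_zero hM hm
    (Nat.add_eq_zero_iff.1 h₂).1).resolve_right fun ⟨_, c, hc⟩ =>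
      hc (Nat.add_eq_zero_iff.1 (congrFun h₃ c)).1

end LastColumns

section Paths

/-- `L` is a Dyck path from `α_{p,q}` to `α_{p',q'}`; membership in `R_i^+` is not imposed. -/
def IsPath (p q p' q' : ℕ) (L : List (ℕ × ℕ)) : Prop :=
  L.IsChain RootStep ∧ L.head? = some (p, q) ∧ L.getLast? = some (p', q')

/-- The horizontal path `α_{p,q}, α_{p,q+1}, …, α_{p,q+k}`. -/
def seg (p : ℕ) : ℕ → ℕ → List (ℕ × ℕ)
  | q, 0 => [(p, q)]
  | q, k + 1 => (p, q) :: seg p (q + 1) k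

variable {p q p' q' k n i j : ℕ} {L L₁ L₂ : List (ℕ × ℕ)}

theorem mem_seg {x : ℕ × ℕ} : x ∈ seg p q k ↔ x.1 = p ∧ q ≤ x.2 ∧ x.2 ≤ q + k := by
  obtain ⟨a, b⟩ := x
  induction k generalizing q with
  | zero => simp only [seg, List.mem_singleton, Prod.mk.injEq]; omega
  | succ k ih => simp only [seg, List.mem_cons, Prod.mk.injEq, ih]; omega

theorem not_isPath_nil : ¬ IsPath p q p' q' [] := by
  simp [IsPath]

theorem isPath_singleton_iff {x : ℕ × ℕ} : IsPath p q p' q' [x] ↔ x = (p, q) ∧ p' = p ∧ q' = q := by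
  simp only [IsPath, List.isChain_singleton, List.head?_singleton, List.getLast?_singleton,
    Option.some.injEq, true_and]
  constructor
  · rintro ⟨rfl, h⟩
    exact ⟨rfl, (Prod.mk.inj h).1.symm, (Prod.mk.inj h).2.symm⟩
  · rintro ⟨rfl, rfl, rfl⟩
    exact ⟨rfl, rfl⟩

theorem isPath_cons_cons_iff {x y : ℕ × ℕ} : IsPath p q p' q' (x :: y :: L) ↔
    x = (p, q) ∧ RootStep x y ∧ IsPath y.1 y.2 p' q' (y :: L) := by
  simp only [IsPath, List.isChain_cons_cons, List.head?_cons, List.getLast?_cons_cons,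
    Option.some.injEq, Prod.mk.eta, true_and]
  tauto

theorem IsPath.cons {x : ℕ × ℕ} (hL : IsPath p q p' q' L) (hx : RootStep x (p, q)) :
    IsPath x.1 x.2 p' q' (x :: L) := by
  cases L with
  | nil => exact absurd hL not_isPath_nil
  | cons y L =>
    obtain rfl : y = (p, q) := Option.some.inj hL.2.1
    exact isPath_cons_cons_iff.2 ⟨rfl, hx, hL⟩

theorem isPath_seg (p q k : ℕ) : IsPath p q p (q + k) (seg p q k) := by
  induction k generalizing q with
  | zero => exact isPath_singleton_iff.2 ⟨rfl, rfl, rfl⟩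
  | succ k ih =>
    rw [show q + (k + 1) = q + 1 + k by omega]
    exact (ih (q + 1)).cons (x := (p, q)) (.inl ⟨rfl, rfl⟩)

theorem IsPath.seg_append (hL : IsPath (p + 1) (q + k) p' q' L) :
    IsPath p q p' q' (seg p q k ++ L) := by
  induction k generalizing q with
  | zero => exact hL.cons (x := (p, q)) (.inr ⟨rfl, rfl⟩)
  | succ k ih =>
    rw [show q + (k + 1) = q + 1 + k by omega] at hL
    exact (ih hL).cons (x := (p, q)) (.inl ⟨rfl, rfl⟩)

theorem IsPath.le_of_mem (hL : IsPath p q p' q' L) {x : ℕ × ℕ} (hx : x ∈ L) :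
    p ≤ x.1 ∧ x.1 ≤ p' ∧ q ≤ x.2 ∧ x.2 ≤ q' := by
  induction L generalizing p q x with
  | nil => exact absurd hL not_isPath_nil
  | cons a L ih =>
    cases L with
    | nil =>
      obtain ⟨rfl, rfl, rfl⟩ := isPath_singleton_iff.1 hL
      simp_all
    | cons b L =>
      obtain ⟨rfl, hab, hbL⟩ := isPath_cons_cons_iff.1 hL
      have hb := ih hbL List.mem_cons_self
      rcases List.mem_cons.1 hx with rfl | hx
      · rcases hab with h | h <;> simp only at h <;> omega
      · have := ih hbL hx
        rcases hab with h | h <;> simp only at h <;> omega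

theorem IsPath.le (hL : IsPath p q p' q' L) : p ≤ p' ∧ q ≤ q' := by
  have := hL.le_of_mem (List.mem_of_mem_head? hL.2.1)
  omega

theorem IsPath.eq_seg_or_eq_seg_append (hL : IsPath p q p' q' L) :
    (p' = p ∧ ∃ k, q' = q + k ∧ L = seg p q k) ∨
      ∃ k L', L = seg p q k ++ L' ∧ IsPath (p + 1) (q + k) p' q' L' := by
  induction L generalizing p q with
  | nil => exact absurd hL not_isPath_nil
  | cons a L ih =>
    cases L with
    | nil =>
      obtain ⟨rfl, rfl, rfl⟩ := isPath_singleton_iff.1 hL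
      exact .inl ⟨rfl, 0, rfl, rfl⟩
    | cons b L =>
      obtain ⟨rfl, hab, hbL⟩ := isPath_cons_cons_iff.1 hL
      obtain ⟨r, c⟩ := b
      rcases hab with ⟨hr, hc⟩ | ⟨hr, hc⟩ <;> simp only at hr hc <;> subst hr hc
      · rcases ih hbL with ⟨hp, k, hq, hL⟩ | ⟨k, L', hL, hL'⟩
        · exact .inl ⟨hp, k + 1, by omega, by rw [hL]; rfl⟩
        · refine .inr ⟨k + 1, L', by rw [hL]; rfl, ?_⟩
          rwa [show q + (k + 1) = q + 1 + k by omega]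
      · exact .inr ⟨0, _, rfl, hbL⟩

theorem isPath_one_row_iff : IsPath p q p q' L ↔ ∃ k, q' = q + k ∧ L = seg p q k := by
  constructor
  · intro h
    rcases h.eq_seg_or_eq_seg_append with ⟨-, h⟩ | ⟨k, L', -, h⟩
    · exact h
    · exact absurd h.le.1 (by omega)
  · rintro ⟨k, rfl, rfl⟩
    exact isPath_seg p q k

theorem isPath_two_rows_iff : IsPath p q (p + 1) q' L ↔
    ∃ k l, q' = q + k + l ∧ L = seg p q k ++ seg (p + 1) (q + k) l := by
  constructor
  · intro h
    rcases h.eq_seg_or_eq_seg_append with ⟨hp, -⟩ | ⟨k, L', rfl, hL'⟩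
    · omega
    · obtain ⟨l, hq, rfl⟩ := isPath_one_row_iff.1 hL'
      exact ⟨k, l, hq, rfl⟩
  · rintro ⟨k, l, rfl, rfl⟩
    exact (isPath_seg (p + 1) (q + k) l).seg_append

theorem isPath_three_rows_iff : IsPath p q (p + 2) q' L ↔ ∃ k l r, q' = q + k + l + r ∧
    L = seg p q k ++ (seg (p + 1) (q + k) l ++ seg (p + 2) (q + k + l) r) := by
  constructor
  · intro h
    rcases h.eq_seg_or_eq_seg_append with ⟨hp, -⟩ | ⟨k, L', rfl, hL'⟩
    · omega
    · obtain ⟨l, r, hq, rfl⟩ := isPath_two_rows_iff.1 hL'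
      exact ⟨k, l, r, hq, rfl⟩
  · rintro ⟨k, l, r, rfl, rfl⟩
    exact (isPath_two_rows_iff.2 ⟨l, r, rfl, rfl⟩ : IsPath (p + 1) (q + k) _ _ _).seg_append

theorem isType1_iff : IsType1 n i L ↔
    IsPath 1 i i (2 * n - i - 1) L ∨ IsPath 1 (i + 1) i (2 * n - i) L := by
  constructor
  · rintro ⟨-, hchain, -, h⟩
    exact h.imp (fun h => ⟨hchain, h⟩) fun h => ⟨hchain, h⟩
  · intro h
    refine ⟨?_, h.elim (·.1) (·.1), fun x hx => ?_, h.imp (·.2) (·.2)⟩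
    · rintro rfl
      exact h.elim not_isPath_nil not_isPath_nil
    · rw [inR]
      rcases h with h | h
      · have := h.le
        have := h.le_of_mem hx
        omega
      · have := h.le
        have := h.le_of_mem hx
        omega

theorem isType2_iff : IsType2 n i L₁ L₂ ↔ ∃ j, 1 ≤ j ∧ j < i ∧ IsPath 1 i j (2 * n - j) L₁ ∧
    IsPath 2 i (j + 1) (2 * n - j - 1) L₂ ∧ ∀ x ∈ L₁, x ∉ L₂ := by
  constructor
  · rintro ⟨j, hj, hji, -, -, h₁, h₂, -, -, hd₁, hd₂, hl₁, hl₂, hdis⟩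
    exact ⟨j, hj, hji, ⟨h₁, hd₁, hl₁⟩, ⟨h₂, hd₂, hl₂⟩, fun x hx hx' => hdis x ⟨hx, hx'⟩⟩
  · rintro ⟨j, hj, hji, h₁, h₂, hdis⟩
    refine ⟨j, hj, hji, ?_, ?_, h₁.1, h₂.1, fun x hx => ?_, fun x hx => ?_, h₁.2.1, h₂.2.1,
      h₁.2.2, h₂.2.2, fun x hx => hdis x hx.1 hx.2⟩
    · rintro rfl
      exact not_isPath_nil h₁
    · rintro rfl
      exact not_isPath_nil h₂
    · have := h₁.le
      have := h₁.le_of_mem hx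
      rw [inR]
      omega
    · have := h₂.le
      have := h₂.le_of_mem hx
      rw [inR]
      omega

end Paths

section Membership

/-- The array of values of `s` on `R_i^+`: row `p` lists `α_{p,i}, α_{p,i+1}, …`. -/
def rows (i : ℕ) (s : ℕ × ℕ → ℕ) (p c : ℕ) : ℕ := s (p, i + c)

/-- The root vector with array `t`. -/
def ofRows (i : ℕ) (t : ℕ → ℕ → ℕ) (β : ℕ × ℕ) : ℕ := if i ≤ β.2 then t β.1 (β.2 - i) else 0

variable {n M i p p' c d : ℕ} {m : ℤ} {s : ℕ × ℕ → ℕ}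

theorem rows_ofRows (i : ℕ) (t : ℕ → ℕ → ℕ) : rows i (ofRows i t) = t := by
  funext p c
  simp [rows, ofRows]

theorem ofRows_add (i : ℕ) (t u : ℕ → ℕ → ℕ) : ofRows i (t + u) = ofRows i t + ofRows i u := by
  funext β
  by_cases hβ : i ≤ β.2 <;> simp [ofRows, hβ]

theorem ofRows_rows (hs : ∀ β, ¬ inR n i β → s β = 0) : ofRows i (rows i s) = s := by
  funext β
  rcases le_or_gt i β.2 with hβ | hβ
  · simp [ofRows, rows, hβ, Nat.add_sub_cancel' hβ]
  · rw [ofRows, if_neg (by omega), hs β fun h => by have := h.2.2.1; omega]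

theorem sum_map_seg (i p c k : ℕ) (s : ℕ × ℕ → ℕ) :
    (((seg p (i + c) k).map s).sum : ℤ) = psum (rows i s p) (c + k + 1) - psum (rows i s p) c := by
  induction k generalizing c with
  | zero => simp [seg, psum_succ, rows]
  | succ k ih =>
    have hrow : rows i s p c = s (p, i + c) := rfl
    have hsucc := psum_succ (rows i s p) c
    simp only [seg, List.map_cons, List.sum_cons, Nat.cast_add, add_assoc i c 1, ih (c + 1)]
    rw [show c + 1 + k + 1 = c + (k + 1) + 1 by omega]
    omega

theorem sum_map_seg_append_seg (i p c k l : ℕ) (s : ℕ × ℕ → ℕ) :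
    (((seg p (i + c) k ++ seg (p + 1) (i + c + k) l).map s).sum : ℤ) =
      psum (rows i s p) (c + k + 1) - psum (rows i s p) c +
      (psum (rows i s (p + 1)) (c + k + l + 1) - psum (rows i s (p + 1)) (c + k)) := by
  rw [List.map_append, List.sum_append, Nat.cast_add, sum_map_seg, add_assoc i, sum_map_seg]

theorem forall_isPath_one_row_iff {P : ℤ → Prop} :
    (∀ L, IsPath p (i + c) p (i + d) L → P (L.map s).sum) ↔
      (c ≤ d → P (psum (rows i s p) (d + 1) - psum (rows i s p) c)) := by
  constructor
  · intro h hcd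
    obtain ⟨k, rfl⟩ := Nat.exists_eq_add_of_le hcd
    rw [← sum_map_seg]
    exact h _ (isPath_one_row_iff.2 ⟨k, by omega, rfl⟩)
  · intro h L hL
    obtain ⟨k, hd, rfl⟩ := isPath_one_row_iff.1 hL
    obtain rfl : d = c + k := by omega
    rw [sum_map_seg]
    exact h (by omega)

theorem forall_isPath_succ_row_iff {P : ℤ → Prop} (hp : p' ≠ p) :
    (∀ L, IsPath p (i + c) p' (i + d) L → P (L.map s).sum) ↔
      ∀ a, c ≤ a → ∀ L, IsPath (p + 1) (i + a) p' (i + d) L →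
        P (psum (rows i s p) (a + 1) - psum (rows i s p) c + (L.map s).sum) := by
  constructor
  · intro h a hca L hL
    obtain ⟨k, rfl⟩ := Nat.exists_eq_add_of_le hca
    rw [← add_assoc] at hL
    have := h _ hL.seg_append
    rwa [List.map_append, List.sum_append, Nat.cast_add, sum_map_seg] at this
  · intro h L hL
    obtain ⟨hpp, -⟩ | ⟨k, L', rfl, hL'⟩ := hL.eq_seg_or_eq_seg_append
    · exact absurd hpp hp
    · rw [List.map_append, List.sum_append, Nat.cast_add, sum_map_seg]
      exact h _ (by omega) L' (by rwa [← add_assoc])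

theorem forall_isPath_two_rows_iff {P : ℤ → Prop} :
    (∀ L, IsPath p (i + c) (p + 1) (i + d) L → P (L.map s).sum) ↔
      ∀ a, c ≤ a → a ≤ d → P (psum (rows i s p) (a + 1) - psum (rows i s p) c +
        (psum (rows i s (p + 1)) (d + 1) - psum (rows i s (p + 1)) a)) := by
  rw [forall_isPath_succ_row_iff (by omega)]
  refine forall₂_congr fun a _ => ?_
  exact forall_isPath_one_row_iff (P := fun x => P (_ + x))

theorem forall_isPath_three_rows_iff {P : ℤ → Prop} :
    (∀ L, IsPath p (i + c) (p + 2) (i + d) L → P (L.map s).sum) ↔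
      ∀ a, c ≤ a → ∀ b, a ≤ b → b ≤ d → P (psum (rows i s p) (a + 1) - psum (rows i s p) c +
        (psum (rows i s (p + 1)) (b + 1) - psum (rows i s (p + 1)) a +
          (psum (rows i s (p + 2)) (d + 1) - psum (rows i s (p + 2)) b))) := by
  rw [forall_isPath_succ_row_iff (by omega)]
  refine forall₂_congr fun a _ => ?_
  exact forall_isPath_two_rows_iff (P := fun x => P (_ + x))

theorem forall_isType1_iff {P : List (ℕ × ℕ) → Prop} (hn : 2 * n = M + 1 + 2 * i) :
    (∀ L, IsType1 n i L → P L) ↔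
      (∀ L, IsPath 1 (i + 0) i (i + M) L → P L) ∧
        ∀ L, IsPath 1 (i + 1) i (i + (M + 1)) L → P L := by
  have hend : 2 * n - i = i + (M + 1) := by omega
  simp only [isType1_iff, or_imp, forall_and, hend, add_zero]
  rfl

theorem forall_isType1_one_iff (hn : 2 * n = M + 2) (hM : 1 ≤ M) (h₂ : rows 1 s 2 = 0)
    (h₃ : rows 1 s 3 = 0) :
    (∀ L, IsType1 n 1 L → ((L.map s).sum : ℤ) ≤ m) ↔ Single M m (rows 1 s) := by
  obtain ⟨N, rfl⟩ : ∃ N, M = N + 1 := ⟨M - 1, by omega⟩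
  rw [forall_isType1_iff (by omega : 2 * n = N + 1 + 2 * 1),
    forall_isPath_one_row_iff (P := (· ≤ m)), forall_isPath_one_row_iff (P := (· ≤ m))]
  have hfirst : psum (rows 1 s 1) 1 = rows 1 s 1 0 := by simp [psum]
  constructor
  · rintro ⟨h, h'⟩
    refine ⟨fun a b hab hb => ?_, fun a b _ hab hb => ?_⟩
    · have := h N.zero_le
      have := monotone_psum (rows 1 s 1) (by omega : a + 1 ≤ N + 1)
      simp only [up, low, h₂, h₃, zero_psum, Pi.zero_apply, psum_zero] at *
      omega
    · have := h' (by omega)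
      have := monotone_psum (rows 1 s 1) (by omega : a + 1 ≤ N + 1 + 1)
      simp only [up, low, h₂, h₃, zero_psum] at *
      omega
  · refine fun h => ⟨fun _ => ?_, fun _ => ?_⟩
    · have := h.early N N le_rfl N.lt_succ_self
      simp only [up, low, h₂, h₃, zero_psum, Pi.zero_apply, psum_zero] at *
      omega
    · have := h.late (N + 1) (N + 1) (by omega) le_rfl le_rfl
      simp only [up, low, h₂, h₃, zero_psum] at *
      omega

theorem forall_isType1_two_iff (hn : 2 * n = M + 4) (hM : 1 ≤ M) (h₃ : rows 2 s 3 = 0) :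
    (∀ L, IsType1 n 2 L → ((L.map s).sum : ℤ) ≤ m) ↔ Single M m (rows 2 s) := by
  obtain ⟨N, rfl⟩ : ∃ N, M = N + 1 := ⟨M - 1, by omega⟩
  rw [forall_isType1_iff (by omega : 2 * n = N + 1 + 2 * 2),
    forall_isPath_two_rows_iff (P := (· ≤ m)), forall_isPath_two_rows_iff (P := (· ≤ m))]
  have hfirst : psum (rows 2 s 1) 1 = rows 2 s 1 0 := by simp [psum]
  constructor
  · rintro ⟨h, h'⟩
    refine ⟨fun a b hab hb => ?_, fun a b ha hab hb => ?_⟩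
    · have := h a a.zero_le (by omega)
      have := monotone_psum (rows 2 s 2) (by omega : b + 1 ≤ N + 1)
      simp only [up, low, Nat.reduceAdd, h₃, zero_psum, Pi.zero_apply, psum_zero] at *
      omega
    · have := h' a ha (by omega)
      have := monotone_psum (rows 2 s 2) (by omega : b + 1 ≤ N + 1 + 1)
      simp only [up, low, Nat.reduceAdd, h₃, zero_psum] at *
      omega
  · refine fun h => ⟨fun a _ ha => ?_, fun a ha haN => ?_⟩
    · have := h.early a N ha N.lt_succ_self
      simp only [up, low, Nat.reduceAdd, h₃, zero_psum, Pi.zero_apply, psum_zero] at *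
      omega
    · have := h.late a (N + 1) ha haN le_rfl
      simp only [up, low, Nat.reduceAdd, h₃, zero_psum] at *
      omega

theorem forall_isType1_three_iff (hn : 2 * n = M + 6) (hM : 1 ≤ M) :
    (∀ L, IsType1 n 3 L → ((L.map s).sum : ℤ) ≤ m) ↔ Single M m (rows 3 s) := by
  obtain ⟨N, rfl⟩ : ∃ N, M = N + 1 := ⟨M - 1, by omega⟩
  rw [forall_isType1_iff (by omega : 2 * n = N + 1 + 2 * 3),
    forall_isPath_three_rows_iff (P := (· ≤ m)), forall_isPath_three_rows_iff (P := (· ≤ m))]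
  have hfirst : psum (rows 3 s 1) 1 = rows 3 s 1 0 := by simp [psum]
  have hlast := psum_succ (rows 3 s 3) (N + 1)
  constructor
  · rintro ⟨h, h'⟩
    refine ⟨fun a b hab hb => ?_, fun a b ha hab hb => ?_⟩
    · have := h a a.zero_le b hab (by omega)
      simp only [up, low, Nat.reduceAdd, psum_zero] at *
      omega
    · have := h' a ha b hab hb
      simp only [up, low, Nat.reduceAdd] at *
      omega
  · refine fun h => ⟨fun a _ b hab hb => ?_, fun a ha b hab hb => ?_⟩
    · have := h.early a b hab (by omega)
      simp only [up, low, Nat.reduceAdd, psum_zero] at *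
      omega
    · have := h.late a b ha hab hb
      simp only [up, low, Nat.reduceAdd] at *
      omega

theorem not_isType2_one {L₁ L₂ : List (ℕ × ℕ)} : ¬ IsType2 n 1 L₁ L₂ := by
  rw [isType2_iff]
  omega

theorem isType2_two_iff {L₁ L₂ : List (ℕ × ℕ)} (hn : 2 * n = M + 4) :
    IsType2 n 2 L₁ L₂ ↔ L₁ = seg 1 2 (M + 1) ∧ L₂ = seg 2 2 M := by
  rw [isType2_iff]
  constructor
  · rintro ⟨j, hj, hj2, h₁, h₂, -⟩
    obtain rfl : j = 1 := by omega
    obtain ⟨k, hk, rfl⟩ := isPath_one_row_iff.1 h₁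
    obtain ⟨l, hl, rfl⟩ := isPath_one_row_iff.1 h₂
    obtain rfl : k = M + 1 := by omega
    obtain rfl : l = M := by omega
    exact ⟨rfl, rfl⟩
  · rintro ⟨rfl, rfl⟩
    refine ⟨1, le_rfl, by omega, isPath_one_row_iff.2 ⟨_, by omega, rfl⟩,
      isPath_one_row_iff.2 ⟨_, by omega, rfl⟩, fun x hx hx' => ?_⟩
    rw [mem_seg] at hx hx'
    omega

theorem disjoint_segs_iff {q a b l r : ℕ} :
    (∀ x ∈ seg 1 q a ++ seg 2 (q + a) l, x ∉ seg 2 q b ++ seg 3 (q + b) r) ↔ b < a := by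
  simp only [List.mem_append, mem_seg]
  refine ⟨fun h => ?_, fun h x hx hx' => by omega⟩
  by_contra! hba
  exact h (2, q + a) (by simp) (by simp [hba])

theorem isType2_three_iff {L₁ L₂ : List (ℕ × ℕ)} (hn : 2 * n = M + 6) :
    IsType2 n 3 L₁ L₂ ↔ (L₁ = seg 1 3 (M + 2) ∧ L₂ = seg 2 3 (M + 1)) ∨
      ∃ a l b r, b < a ∧ a + l = M + 1 ∧ b + r = M ∧
        L₁ = seg 1 3 a ++ seg 2 (3 + a) l ∧ L₂ = seg 2 3 b ++ seg 3 (3 + b) r := by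
  rw [isType2_iff]
  constructor
  · rintro ⟨j, hj, hj3, h₁, h₂, hdis⟩
    obtain rfl | rfl : j = 1 ∨ j = 2 := by omega
    · obtain ⟨k, hk, rfl⟩ := isPath_one_row_iff.1 h₁
      obtain ⟨l, hl, rfl⟩ := isPath_one_row_iff.1 h₂
      obtain rfl : k = M + 2 := by omega
      obtain rfl : l = M + 1 := by omega
      exact .inl ⟨rfl, rfl⟩
    · obtain ⟨a, l, hl, rfl⟩ := isPath_two_rows_iff.1 h₁
      obtain ⟨b, r, hr, rfl⟩ := isPath_two_rows_iff.1 h₂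
      exact .inr ⟨a, l, b, r, disjoint_segs_iff.1 hdis, by omega, by omega, rfl, rfl⟩
  · rintro (⟨rfl, rfl⟩ | ⟨a, l, b, r, hba, hl, hr, rfl, rfl⟩)
    · refine ⟨1, le_rfl, by omega, isPath_one_row_iff.2 ⟨_, by omega, rfl⟩,
        isPath_one_row_iff.2 ⟨_, by omega, rfl⟩, fun x hx hx' => ?_⟩
      rw [mem_seg] at hx hx'
      omega
    · exact ⟨2, by omega, by omega, isPath_two_rows_iff.2 ⟨a, l, by omega, rfl⟩,
        isPath_two_rows_iff.2 ⟨b, r, by omega, rfl⟩, disjoint_segs_iff.2 hba⟩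

theorem forall_isType2_two_iff (hn : 2 * n = M + 4) :
    (∀ L₁ L₂, IsType2 n 2 L₁ L₂ → (((L₁ ++ L₂).map s).sum : ℤ) ≤ m) ↔
      psum (rows 2 s 1) (M + 2) + psum (rows 2 s 2) (M + 1) ≤ m := by
  have hsum : (((seg 1 2 (M + 1) ++ seg 2 2 M).map s).sum : ℤ) =
      psum (rows 2 s 1) (M + 2) + psum (rows 2 s 2) (M + 1) := by
    rw [List.map_append, List.sum_append, Nat.cast_add, sum_map_seg 2 1 0, sum_map_seg 2 2 0]
    simp only [psum_zero, zero_add, sub_zero]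
  simp only [isType2_two_iff hn, and_imp, forall_eq_apply_imp_iff, forall_eq, hsum]

theorem forall_isType2_three_iff (hn : 2 * n = M + 6) :
    (∀ L₁ L₂, IsType2 n 3 L₁ L₂ → (((L₁ ++ L₂).map s).sum : ℤ) ≤ m) ↔
      (∀ a b, b < a → a ≤ M + 1 →
        up M (rows 3 s) a + low M (rows 3 s) b + rows 3 s 2 (M + 1) ≤ m) ∧
      psum (rows 3 s 1) (M + 3) + psum (rows 3 s 2) (M + 2) ≤ m := by
  have hfull : (((seg 1 3 (M + 2) ++ seg 2 3 (M + 1)).map s).sum : ℤ) =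
      psum (rows 3 s 1) (M + 3) + psum (rows 3 s 2) (M + 2) := by
    rw [List.map_append, List.sum_append, Nat.cast_add, sum_map_seg 3 1 0, sum_map_seg 3 2 0]
    simp only [psum_zero, zero_add, sub_zero]
  have hcross (a l b r : ℕ) (hl : a + l = M + 1) (hr : b + r = M) :
      (((seg 1 3 a ++ seg 2 (3 + a) l ++ (seg 2 3 b ++ seg 3 (3 + b) r)).map s).sum : ℤ) =
        up M (rows 3 s) a + low M (rows 3 s) b + rows 3 s 2 (M + 1) := by
    have h₁ := sum_map_seg_append_seg 3 1 0 a l s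
    have h₂ := sum_map_seg_append_seg 3 2 0 b r s
    have hrow := psum_succ (rows 3 s 2) (M + 1)
    rw [List.map_append, List.sum_append, Nat.cast_add, up, low]
    simp only [zero_add, add_zero, Nat.reduceAdd, psum_zero, hl, hr] at *
    omega
  simp only [isType2_three_iff hn]
  constructor
  · refine fun h => ⟨fun a b hba ha => ?_, hfull ▸ h _ _ (.inl ⟨rfl, rfl⟩)⟩
    obtain ⟨l, hl⟩ := Nat.exists_eq_add_of_le ha
    obtain ⟨r, hr⟩ := Nat.exists_eq_add_of_le (by omega : b ≤ M)
    rw [← hcross a l b r hl.symm hr.symm]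
    exact h _ _ (.inr ⟨a, l, b, r, hba, hl.symm, hr.symm, rfl, rfl⟩)
  · rintro ⟨h, h'⟩ _ _ (⟨rfl, rfl⟩ | ⟨a, l, b, r, hba, hl, hr, rfl, rfl⟩)
    · rwa [hfull]
    · rw [hcross a l b r hl hr]
      exact h a b hba (by omega)

theorem cB_eq_two (hi : i ≠ 1) (hn : i ≠ n) : cB n i = 2 := by
  simp [cB, hi, hn]

theorem rows_eq_zero (hs : ∀ β, ¬ inR n i β → s β = 0) (h : i < p ∨ 2 * n < p + (i + c)) :
    rows i s p c = 0 :=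
  hs _ fun hR => by have := hR.2.1; have := hR.2.2.2; simp only at *; omega

theorem mem_SD_one_iff {m : ℕ} (hn : 2 * n = M + 2) (hM : 1 ≤ M)
    (hs : ∀ β, ¬ inR n 1 β → s β = 0) : s ∈ SD n 1 m ↔ Feasible M m (rows 1 s) := by
  have h₂ : rows 1 s 2 = 0 := funext fun c => rows_eq_zero hs (.inl (by omega))
  have h₃ : rows 1 s 3 = 0 := funext fun c => rows_eq_zero hs (.inl (by omega))
  have hsingle := forall_isType1_one_iff (m := m) hn hM h₂ h₃
  simp only [Nat.cast_le] at hsingle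
  simp only [SD, Set.mem_ofPred_eq, not_isType2_one, hsingle, IsEmpty.forall_iff, implies_true,
    and_true]
  refine ⟨fun h => ?_, fun h => ⟨hs, h.toSingle⟩⟩
  have hfull : psum (rows 1 s 1) (M + 3) ≤ 2 * m := by
    have hearly := h.2.early 0 0 le_rfl hM
    have hlate := h.2.late M M hM le_rfl le_rfl
    have hlast (c : ℕ) (hc : M < c) : rows 1 s 1 c = 0 := rows_eq_zero hs (.inr (by omega))
    simp only [up, low, h₂, h₃, zero_psum, Pi.zero_apply, zero_add] at hearly hlate
    have hfirst : psum (rows 1 s 1) 1 = rows 1 s 1 0 := by simp [psum]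
    rw [psum_succ _ (M + 2), psum_succ _ (M + 1), hlast _ (by omega), hlast _ (by omega)]
    omega
  refine ⟨⟨h.2, fun a b _ ha => ?_⟩, by rwa [h₂, zero_psum, add_zero]⟩
  have := monotone_psum (rows 1 s 1) (by omega : a + 1 ≤ M + 3)
  simp only [up, low, h₂, h₃, zero_psum, Pi.zero_apply]
  omega

theorem mem_SD_two_iff {m : ℕ} (hn : 2 * n = M + 4) (hM : 1 ≤ M)
    (hs : ∀ β, ¬ inR n 2 β → s β = 0) : s ∈ SD n 2 m ↔ Feasible M m (rows 2 s) := by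
  have h₃ : rows 2 s 3 = 0 := funext fun c => rows_eq_zero hs (.inl (by omega))
  have hsingle := forall_isType1_two_iff (m := m) hn hM h₃
  have hdouble := forall_isType2_two_iff (m := m * (2 : ℕ)) (s := s) hn
  simp only [Nat.cast_le, ← Nat.cast_mul] at hsingle hdouble
  rw [SD, Set.mem_ofPred_eq, cB_eq_two (by omega) (by omega), hsingle, hdouble]
  have hx : psum (rows 2 s 1) (M + 3) = psum (rows 2 s 1) (M + 2) := by
    rw [psum_succ _ (M + 2), rows_eq_zero hs (.inr (by omega)), Nat.cast_zero, add_zero]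
  have hw : rows 2 s 2 (M + 1) = 0 := rows_eq_zero hs (.inr (by omega))
  have hy : psum (rows 2 s 2) (M + 2) = psum (rows 2 s 2) (M + 1) := by
    rw [psum_succ _ (M + 1), hw, Nat.cast_zero, add_zero]
  constructor
  · rintro ⟨-, h, hfull⟩
    refine ⟨⟨h, fun a b hba ha => ?_⟩, by push_cast at *; omega⟩
    have := monotone_psum (rows 2 s 1) (by omega : a + 1 ≤ M + 2)
    have := monotone_psum (rows 2 s 2) (by omega : b + 1 ≤ a)
    simp only [up, low, h₃, zero_psum, hw]
    push_cast at hfull ⊢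
    omega
  · intro h
    have := h.total
    exact ⟨hs, h.toSingle, by push_cast; omega⟩

theorem mem_SD_three_iff {m : ℕ} (hn : 2 * n = M + 6) (hM : 1 ≤ M)
    (hs : ∀ β, ¬ inR n 3 β → s β = 0) : s ∈ SD n 3 m ↔ Feasible M m (rows 3 s) := by
  have hsingle := forall_isType1_three_iff (m := m) (s := s) hn hM
  have hdouble := forall_isType2_three_iff (m := 2 * m) (s := s) hn
  norm_cast at hsingle hdouble
  rw [SD, Set.mem_ofPred_eq, cB_eq_two (by omega) (by omega), mul_comm m, hsingle, hdouble]
  push_cast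
  exact ⟨fun ⟨_, h, hcross, htotal⟩ => ⟨⟨h, hcross⟩, htotal⟩,
    fun h => ⟨hs, h.toSingle, h.cross, h.total⟩⟩

theorem mem_SD_iff_feasible {m : ℕ} (hi : 1 ≤ i) (hi3 : i ≤ 3) (hn : 2 * n = M + 2 * i)
    (hM : 1 ≤ M) (hs : ∀ β, ¬ inR n i β → s β = 0) : s ∈ SD n i m ↔ Feasible M m (rows i s) := by
  interval_cases i
  · exact mem_SD_one_iff hn hM hs
  · exact mem_SD_two_iff hn hM hs
  · exact mem_SD_three_iff hn hM hs

theorem SplitsAt.exists_mem_SD {m j : ℕ} (h : SplitsAt (Feasible M) m j (rows i s)) (hi : 1 ≤ i)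
    (hi3 : i ≤ 3) (hn : 2 * n = M + 2 * i) (hM : 1 ≤ M) (hs : ∀ β, ¬ inR n i β → s β = 0) :
    j ≤ m ∧ ∃ t ∈ SD n i j, ∃ u ∈ SD n i (m - j), s = t + u := by
  obtain ⟨t, u, htu, ht, hu⟩ := h
  have hjm : j ≤ m := by have := hu.level_nonneg hM; omega
  have hsum : s = ofRows i t + ofRows i u := by rw [← ofRows_add, ← htu, ofRows_rows hs]
  have hzero (β : ℕ × ℕ) (hβ : ¬ inR n i β) : ofRows i t β = 0 ∧ ofRows i u β = 0 :=
    Nat.add_eq_zero_iff.1 (by rw [← hs β hβ, hsum, Pi.add_apply])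
  rw [← Nat.cast_sub hjm] at hu
  exact ⟨hjm, _, (mem_SD_iff_feasible hi hi3 hn hM fun β hβ => (hzero β hβ).1).2
    (by rwa [rows_ofRows]), _, (mem_SD_iff_feasible hi hi3 hn hM fun β hβ => (hzero β hβ).2).2
    (by rwa [rows_ofRows]), hsum⟩

theorem exists_split_of_le_two {m : ℕ} (hi : 1 ≤ i) (hi2 : i ≤ 2) (hin : i < n)
    (hs : s ∈ SD n i (m + 1)) : ∃ t ∈ SD n i 1, ∃ u ∈ SD n i m, s = t + u := by
  obtain ⟨M, hn⟩ : ∃ M, 2 * n = M + 2 * i := ⟨2 * n - 2 * i, by omega⟩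
  have h := (mem_SD_iff_feasible hi (by omega) hn (by omega) hs.1).1 hs
  have h₃ : rows i s 3 = 0 := funext fun c => rows_eq_zero hs.1 (.inl (by omega))
  exact ((h.splitsAt_one (by omega) (by omega) (rows_eq_zero hs.1 (by omega)) h₃).exists_mem_SD
    (j := 1) hi (by omega) hn (by omega) hs.1).2

theorem exists_split_three {m : ℕ} (hn : 4 ≤ n) (hm : 1 ≤ m) (hs : s ∈ SD n 3 m) :
    ∃ j, (j = 1 ∨ j = 2) ∧ j ≤ m ∧ ∃ t ∈ SD n 3 j, ∃ u ∈ SD n 3 (m - j), s = t + u := by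
  obtain ⟨M, hM⟩ : ∃ M, 2 * n = M + 2 * 3 := ⟨2 * n - 6, by omega⟩
  have h := (mem_SD_iff_feasible (by omega) le_rfl hM (by omega) hs.1).1 hs
  obtain ⟨j, hj, hsplit⟩ := h.exists_splitsAt (by omega) (by omega)
  obtain ⟨j, rfl⟩ : ∃ k : ℕ, j = k := ⟨j.toNat, by omega⟩
  exact ⟨j, by omega, hsplit.exists_mem_SD (by omega) le_rfl hM (by omega) hs.1⟩

end Membership

section FullRank

variable {n i m : ℕ} {s t : ℕ × ℕ → ℕ} {L L₁ L₂ : List (ℕ × ℕ)}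

theorem not_isType1_self : ¬ IsType1 (n + 1) (n + 1) L := by
  rw [isType1_iff]
  rintro (h | h) <;> have := h.le <;> omega

theorem cB_self (n : ℕ) : cB n n = 1 := by
  simp [cB]

theorem isType2_four_four_iff : IsType2 4 4 L₁ L₂ ↔
    (L₁ = seg 1 4 3 ∧ L₂ = seg 2 4 2) ∨
    (L₁ = seg 1 4 1 ++ seg 2 5 1 ∧ L₂ = seg 2 4 0 ++ seg 3 4 1) ∨
    (L₁ = seg 1 4 2 ++ seg 2 6 0 ∧ L₂ = seg 2 4 0 ++ seg 3 4 1) ∨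
    (L₁ = seg 1 4 2 ++ seg 2 6 0 ∧ L₂ = seg 2 4 1 ++ seg 3 5 0) ∨
    (L₁ = seg 1 4 1 ++ (seg 2 5 0 ++ seg 3 5 0) ∧
      L₂ = seg 2 4 0 ++ (seg 3 4 0 ++ seg 4 4 0)) := by
  rw [isType2_iff]
  constructor
  · rintro ⟨j, hj, hj4, h₁, h₂, hdis⟩
    obtain rfl | rfl | rfl : j = 1 ∨ j = 2 ∨ j = 3 := by omega
    · obtain ⟨a, ha, rfl⟩ := isPath_one_row_iff.1 h₁
      obtain ⟨b, hb, rfl⟩ := isPath_one_row_iff.1 h₂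
      obtain ⟨rfl, rfl⟩ : a = 3 ∧ b = 2 := by omega
      exact .inl ⟨rfl, rfl⟩
    · obtain ⟨a, l, ha, rfl⟩ := isPath_two_rows_iff.1 h₁
      obtain ⟨b, r, hb, rfl⟩ := isPath_two_rows_iff.1 h₂
      have hba : b < a := disjoint_segs_iff.1 hdis
      obtain ⟨rfl, rfl, rfl, rfl⟩ | ⟨rfl, rfl, rfl, rfl⟩ | ⟨rfl, rfl, rfl, rfl⟩ :
          (a = 1 ∧ l = 1 ∧ b = 0 ∧ r = 1) ∨ (a = 2 ∧ l = 0 ∧ b = 0 ∧ r = 1) ∨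
            (a = 2 ∧ l = 0 ∧ b = 1 ∧ r = 0) := by omega
      all_goals simp [seg]
    · obtain ⟨a, l, k, ha, rfl⟩ := isPath_three_rows_iff.1 h₁
      obtain ⟨b, r, c, hb, rfl⟩ := isPath_three_rows_iff.1 h₂
      have ha0 : a ≠ 0 := by
        rintro rfl
        exact hdis (2, 4) (by simp [mem_seg]) (by simp [mem_seg])
      obtain ⟨rfl, rfl, rfl⟩ : a = 1 ∧ l = 0 ∧ k = 0 := by omega
      obtain ⟨rfl, rfl, rfl⟩ : b = 0 ∧ r = 0 ∧ c = 0 := by omega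
      simp [seg]
  · rintro (⟨rfl, rfl⟩ | ⟨rfl, rfl⟩ | ⟨rfl, rfl⟩ | ⟨rfl, rfl⟩ | ⟨rfl, rfl⟩)
    · exact ⟨1, by omega, by omega, isPath_seg _ _ _, isPath_seg _ _ _, by simp [seg]⟩
    iterate 3
      exact ⟨2, by omega, by omega, (isPath_seg _ _ _).seg_append, (isPath_seg _ _ _).seg_append,
        by simp [seg]⟩
    · exact ⟨3, by omega, by omega, (isPath_seg _ _ _).seg_append.seg_append,
        (isPath_seg _ _ _).seg_append.seg_append, by simp [seg]⟩

theorem isType2_three_three_iff : IsType2 3 3 L₁ L₂ ↔ (L₁ = seg 1 3 2 ∧ L₂ = seg 2 3 1) ∨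
    (L₁ = seg 1 3 1 ++ seg 2 4 0 ∧ L₂ = seg 2 3 0 ++ seg 3 3 0) := by
  rw [isType2_three_iff (M := 0) rfl]
  refine or_congr_right ⟨?_, fun h => ⟨1, 0, 0, 0, by omega, rfl, rfl, h⟩⟩
  rintro ⟨a, l, b, r, hba, ha, hb, rfl, rfl⟩
  obtain ⟨rfl, rfl, rfl, rfl⟩ : a = 1 ∧ l = 0 ∧ b = 0 ∧ r = 0 := by omega
  exact ⟨rfl, rfl⟩

theorem mem_SD_self_iff (hs : ∀ β, ¬ inR (n + 1) (n + 1) β → s β = 0) :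
    s ∈ SD (n + 1) (n + 1) m ↔
      ∀ L₁ L₂, IsType2 (n + 1) (n + 1) L₁ L₂ → ((L₁ ++ L₂).map s).sum ≤ m := by
  rw [SD, Set.mem_ofPred_eq, cB_self, mul_one]
  exact ⟨fun h => h.2.2, fun h => ⟨hs, fun _ hL => absurd hL not_isType1_self, h⟩⟩

theorem mem_SD_one_one (hs : ∀ β, ¬ inR 1 1 β → s β = 0) : s ∈ SD 1 1 m :=
  (mem_SD_self_iff hs).2 fun _ _ hL => absurd hL not_isType2_one

theorem mem_SD_two_two_iff (hs : ∀ β, ¬ inR 2 2 β → s β = 0) :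
    s ∈ SD 2 2 m ↔ s (1, 2) + s (1, 3) + s (2, 2) ≤ m := by
  rw [mem_SD_self_iff hs]
  simp [isType2_two_iff (M := 0), seg, add_assoc]

theorem mem_SD_three_three_iff (hs : ∀ β, ¬ inR 3 3 β → s β = 0) : s ∈ SD 3 3 m ↔
    s (1, 3) + s (1, 4) + s (1, 5) + s (2, 3) + s (2, 4) ≤ m ∧
      s (1, 3) + s (1, 4) + s (2, 4) + s (2, 3) + s (3, 3) ≤ m := by
  rw [mem_SD_self_iff hs]
  simp [isType2_three_three_iff, seg, add_assoc, or_imp, forall_and]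

theorem mem_SD_four_four_iff (hs : ∀ β, ¬ inR 4 4 β → s β = 0) : s ∈ SD 4 4 m ↔
    s (1, 4) + s (1, 5) + s (1, 6) + s (1, 7) + s (2, 4) + s (2, 5) + s (2, 6) ≤ m ∧
    s (1, 4) + s (1, 5) + s (2, 5) + s (2, 6) + s (2, 4) + s (3, 4) + s (3, 5) ≤ m ∧
    s (1, 4) + s (1, 5) + s (1, 6) + s (2, 6) + s (2, 4) + s (3, 4) + s (3, 5) ≤ m ∧
    s (1, 4) + s (1, 5) + s (1, 6) + s (2, 6) + s (2, 4) + s (2, 5) + s (3, 5) ≤ m ∧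
    s (1, 4) + s (1, 5) + s (2, 5) + s (3, 5) + s (2, 4) + s (3, 4) + s (4, 4) ≤ m := by
  rw [mem_SD_self_iff hs]
  simp [isType2_four_four_iff, seg, add_assoc, or_imp, forall_and]

theorem exists_split_one_one (hs : s ∈ SD 1 1 (m + 1)) :
    ∃ t ∈ SD 1 1 1, ∃ u ∈ SD 1 1 m, s = t + u :=
  ⟨0, mem_SD_one_one fun _ _ => rfl, s, mem_SD_one_one hs.1, (zero_add s).symm⟩

theorem eq_zero_of_le (hs : ∀ β, ¬ inR n i β → s β = 0) (h : t ≤ s) :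
    ∀ β, ¬ inR n i β → t β = 0 :=
  fun β hβ => Nat.eq_zero_of_le_zero ((h β).trans_eq (hs β hβ))

theorem update_le {γ : ℕ × ℕ} {a : ℕ} (ha : a ≤ s γ) (ht : t ≤ s) :
    Function.update t γ a ≤ s :=
  update_le_iff.2 ⟨ha, fun β _ => ht β⟩

theorem exists_le_add_eq {r a b : ℕ} (h : r ≤ a + b) : ∃ a' ≤ a, ∃ b' ≤ b, a' + b' = r :=
  ⟨min r a, by omega, r - min r a, by omega, by omega⟩

theorem exists_split_two_two (hs : s ∈ SD 2 2 (m + 1)) :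
    ∃ t ∈ SD 2 2 1, ∃ u ∈ SD 2 2 m, s = t + u := by
  have h := (mem_SD_two_two_iff hs.1).1 hs
  obtain ⟨a, ha, b, hb, hab⟩ := exists_le_add_eq
    (show min 1 (s (1, 2) + s (1, 3) + s (2, 2)) ≤ s (1, 2) + (s (1, 3) + s (2, 2)) by omega)
  obtain ⟨c, hc, d, hd, hcd⟩ := exists_le_add_eq hb
  obtain ⟨t, h12, h13, h22, ht⟩ : ∃ t, t (1, 2) = a ∧ t (1, 3) = c ∧ t (2, 2) = d ∧ t ≤ s :=
    ⟨_, rfl, rfl, rfl, update_le ha <| update_le hc <| update_le hd (Nat.zero_le <| s ·)⟩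
  refine ⟨t, (mem_SD_two_two_iff (eq_zero_of_le hs.1 ht)).2 ?_,
    s - t, (mem_SD_two_two_iff (eq_zero_of_le hs.1 tsub_le_self)).2 ?_,
    (add_tsub_cancel_of_le ht).symm⟩
  all_goals
    simp only [Pi.sub_apply, h12, h13, h22]
    omega

theorem exists_le_saturating {j p P x : ℕ} (hp : p ≤ j) (hP : P ≤ m + p) (hx : P + x ≤ m + j) :
    ∃ x' ≤ x, p + x' ≤ j ∧ P + x ≤ m + (p + x') :=
  ⟨min (j - p) x, by omega, by omega, by omega⟩

/-- The four roots common to both double paths are served first; the two private roots then fill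
what is left. -/
theorem exists_split_three_three (hs : s ∈ SD 3 3 (m + 2)) :
    ∃ t ∈ SD 3 3 2, ∃ u ∈ SD 3 3 m, s = t + u := by
  obtain ⟨h₁, h₂⟩ := (mem_SD_three_three_iff hs.1).1 hs
  obtain ⟨r, hr⟩ : ∃ r, r = min 2 (s (1, 3) + s (1, 4) + (s (2, 3) + s (2, 4))) := ⟨_, rfl⟩
  obtain ⟨p, hp, q, hq, hpq⟩ := exists_le_add_eq (hr.trans_le (min_le_right _ _))
  obtain ⟨a, ha, b, hb, hab⟩ := exists_le_add_eq hp
  obtain ⟨c, hc, d, hd, hcd⟩ := exists_le_add_eq hq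
  obtain ⟨f, hf, hf₁, hf₂⟩ := exists_le_saturating (m := m) (j := 2) (p := a + b + c + d)
    (P := s (1, 3) + s (1, 4) + s (2, 3) + s (2, 4)) (x := s (1, 5)) (by omega) (by omega)
    (by omega)
  obtain ⟨g, hg, hg₁, hg₂⟩ := exists_le_saturating (m := m) (j := 2) (p := a + b + c + d)
    (P := s (1, 3) + s (1, 4) + s (2, 3) + s (2, 4)) (x := s (3, 3)) (by omega) (by omega)
    (by omega)
  obtain ⟨t, h13, h14, h23, h24, h15, h33, ht⟩ : ∃ t : ℕ × ℕ → ℕ, t (1, 3) = a ∧ t (1, 4) = b ∧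
      t (2, 3) = c ∧ t (2, 4) = d ∧ t (1, 5) = f ∧ t (3, 3) = g ∧ t ≤ s :=
    ⟨_, rfl, rfl, rfl, rfl, rfl, rfl, update_le ha <| update_le hb <| update_le hc <|
      update_le hd <| update_le hf <| update_le hg (Nat.zero_le <| s ·)⟩
  refine ⟨t, (mem_SD_three_three_iff (eq_zero_of_le hs.1 ht)).2 ⟨?_, ?_⟩,
    s - t, (mem_SD_three_three_iff (eq_zero_of_le hs.1 tsub_le_self)).2 ⟨?_, ?_⟩,
    (add_tsub_cancel_of_le ht).symm⟩
  all_goals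
    simp only [Pi.sub_apply, h13, h14, h23, h24, h15, h33]
    omega

/-- The constraints form an odd cycle: `x = y = z = 1` is feasible at level `2` but is
not a sum of two vectors feasible at level `1`, hence the steps of size two. -/
theorem exists_pairwise_split {q x y z : ℕ} (hm : Even m) (hxy : q + x + y ≤ m + 2)
    (hxz : q + x + z ≤ m + 2) (hyz : q + y + z ≤ m + 2) :
    ∃ q' ≤ q, ∃ x' ≤ x, ∃ y' ≤ y, ∃ z' ≤ z,
      (q' + x' + y' ≤ 2 ∧ q' + x' + z' ≤ 2 ∧ q' + y' + z' ≤ 2) ∧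
      q + x + y ≤ m + (q' + x' + y') ∧ q + x + z ≤ m + (q' + x' + z') ∧
      q + y + z ≤ m + (q' + y' + z') := by
  obtain ⟨k, rfl⟩ := hm
  obtain rfl | rfl | hq : q = 0 ∨ q = 1 ∨ 2 ≤ q := by omega
  · rcases Nat.eq_zero_or_pos x with rfl | hx
    · exact ⟨0, by omega, 0, by omega, min 2 y, by omega, min z (2 - min 2 y), by omega, by omega,
        by omega⟩
    rcases Nat.eq_zero_or_pos y with rfl | hy
    · exact ⟨0, by omega, min 2 x, by omega, 0, by omega, min z (2 - min 2 x), by omega, by omega,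
        by omega⟩
    rcases Nat.eq_zero_or_pos z with rfl | hz
    · exact ⟨0, by omega, min 2 x, by omega, min y (2 - min 2 x), by omega, 0, by omega, by omega,
        by omega⟩
    · exact ⟨0, by omega, 1, hx, 1, hy, 1, hz, by omega, by omega⟩
  · by_cases hx : 1 ≤ x ∧ y + z < k + k + 1
    · exact ⟨1, le_rfl, 1, hx.1, 0, by omega, 0, by omega, by omega, by omega⟩
    by_cases hy : 1 ≤ y ∧ x + z < k + k + 1
    · exact ⟨1, le_rfl, 0, by omega, 1, hy.1, 0, by omega, by omega, by omega⟩
    · exact ⟨1, le_rfl, 0, by omega, 0, by omega, min 1 z, by omega, by omega, by omega⟩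
  · exact ⟨2, hq, 0, by omega, 0, by omega, 0, by omega, by omega, by omega⟩

/-- The three middle constraints are pairwise constraints on the roots `(1,6)`, `(2,5)`, `(3,4)`
with a common part; each outer one adds a private root, `(1,7)` or `(4,4)`. -/
theorem exists_split_four_four (hm : Even m) (hs : s ∈ SD 4 4 (m + 2)) :
    ∃ t ∈ SD 4 4 2, ∃ u ∈ SD 4 4 m, s = t + u := by
  obtain ⟨h₁, h₂, h₃, h₄, h₅⟩ := (mem_SD_four_four_iff hs.1).1 hs
  obtain ⟨q, hq, x, hx, y, hy, z, hz, hcap, hrest⟩ := exists_pairwise_split hm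
    (q := s (1, 4) + (s (1, 5) + (s (2, 4) + (s (2, 6) + s (3, 5))))) (x := s (1, 6))
    (y := s (2, 5)) (z := s (3, 4)) (by omega) (by omega) (by omega)
  obtain ⟨a, ha, q₁, hq₁, e₁⟩ := exists_le_add_eq hq
  obtain ⟨b, hb, q₂, hq₂, e₂⟩ := exists_le_add_eq hq₁
  obtain ⟨c, hc, q₃, hq₃, e₃⟩ := exists_le_add_eq hq₂
  obtain ⟨d, hd, e, he, e₄⟩ := exists_le_add_eq hq₃
  obtain ⟨f, hf, hf₁, hf₂⟩ := exists_le_saturating (m := m) (j := 2) (p := a + b + x + c + y + d)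
    (P := s (1, 4) + s (1, 5) + s (1, 6) + s (2, 4) + s (2, 5) + s (2, 6)) (x := s (1, 7))
    (by omega) (by omega) (by omega)
  obtain ⟨g, hg, hg₁, hg₂⟩ := exists_le_saturating (m := m) (j := 2) (p := a + b + y + e + c + z)
    (P := s (1, 4) + s (1, 5) + s (2, 5) + s (3, 5) + s (2, 4) + s (3, 4)) (x := s (4, 4))
    (by omega) (by omega) (by omega)
  obtain ⟨t, h14, h15, h24, h26, h35, h16, h25, h34, h17, h44, ht⟩ : ∃ t : ℕ × ℕ → ℕ,
      t (1, 4) = a ∧ t (1, 5) = b ∧ t (2, 4) = c ∧ t (2, 6) = d ∧ t (3, 5) = e ∧ t (1, 6) = x ∧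
      t (2, 5) = y ∧ t (3, 4) = z ∧ t (1, 7) = f ∧ t (4, 4) = g ∧ t ≤ s :=
    ⟨_, rfl, rfl, rfl, rfl, rfl, rfl, rfl, rfl, rfl, rfl, update_le ha <| update_le hb <|
      update_le hc <| update_le hd <| update_le he <| update_le hx <| update_le hy <|
      update_le hz <| update_le hf <| update_le hg (Nat.zero_le <| s ·)⟩
  refine ⟨t, (mem_SD_four_four_iff (eq_zero_of_le hs.1 ht)).2 ⟨?_, ?_, ?_, ?_, ?_⟩,
    s - t, (mem_SD_four_four_iff (eq_zero_of_le hs.1 tsub_le_self)).2 ⟨?_, ?_, ?_, ?_, ?_⟩,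
    (add_tsub_cancel_of_le ht).symm⟩
  all_goals
    simp only [Pi.sub_apply, h14, h15, h24, h26, h35, h16, h25, h34, h17, h44]
    omega

end FullRank

section Normality

variable {n i m : ℕ} {s t : ℕ × ℕ → ℕ}

theorem zero_mem_SD (n i m : ℕ) : 0 ∈ SD n i m := by
  have hsum (L : List (ℕ × ℕ)) : (L.map (0 : ℕ × ℕ → ℕ)).sum = 0 :=
    List.sum_eq_zero fun _ hx => (List.mem_map.1 hx).elim fun _ h => h.2.symm
  exact ⟨fun _ _ => rfl, fun L _ => by simp [hsum], fun L₁ L₂ _ => by simp [hsum]⟩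

theorem add_mem_SD {a b : ℕ} (hs : s ∈ SD n i a) (ht : t ∈ SD n i b) :
    s + t ∈ SD n i (a + b) := by
  have hsum (L : List (ℕ × ℕ)) : (L.map (s + t)).sum = (L.map s).sum + (L.map t).sum :=
    List.sum_map_add
  refine ⟨fun β hβ => by simp [hs.1 β hβ, ht.1 β hβ], fun L hL => ?_, fun L₁ L₂ hL => ?_⟩
  · rw [hsum]
    exact Nat.add_le_add (hs.2.1 L hL) (ht.2.1 L hL)
  · rw [hsum, add_mul]
    exact Nat.add_le_add (hs.2.2 L₁ L₂ hL) (ht.2.2 L₁ L₂ hL)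

theorem exists_odd_split_three (hn : 4 ≤ n) (hs : s ∈ SD n 3 (2 * m + 1)) :
    ∃ t ∈ SD n 3 1, ∃ u ∈ SD n 3 (2 * m), s = t + u := by
  induction m generalizing s with
  | zero => exact ⟨s, hs, 0, zero_mem_SD _ _ _, (add_zero s).symm⟩
  | succ m ih =>
    obtain ⟨j, rfl | rfl, -, t, ht, u, hu, rfl⟩ := exists_split_three hn (by omega) hs
    · exact ⟨t, ht, u, hu, rfl⟩
    · obtain ⟨t', ht', u', hu', rfl⟩ := ih hu
      refine ⟨t', ht', t + u', ?_, add_left_comm t t' u'⟩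
      convert add_mem_SD ht hu' using 2
      omega

theorem exists_even_split_three (hn : 4 ≤ n) (hs : s ∈ SD n 3 (2 * m + 2)) :
    ∃ t ∈ SD n 3 2, ∃ u ∈ SD n 3 (2 * m), s = t + u := by
  obtain ⟨j, rfl | rfl, -, t, ht, u, hu, rfl⟩ := exists_split_three hn (by omega) hs
  · obtain ⟨t', ht', u', hu', rfl⟩ := exists_odd_split_three (m := m) hn hu
    exact ⟨t + t', add_mem_SD ht ht', u', hu', (add_assoc t t' u').symm⟩
  · exact ⟨t, ht, u, hu, rfl⟩

theorem exists_split_epsB (hi : 1 ≤ i) (hin : i ≤ n) (hcase : i ≤ 3 ∨ n ≤ 4)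
    (hs : s ∈ SD n i (epsB i * (m + 1))) :
    ∃ t ∈ SD n i (epsB i), ∃ u ∈ SD n i (epsB i * m), s = t + u := by
  obtain rfl | rfl | rfl | ⟨rfl, rfl⟩ : i = 1 ∨ i = 2 ∨ i = 3 ∨ (i = 4 ∧ n = 4) := by omega
  · simp only [epsB, Nat.reduceLeDiff, if_true, one_mul] at hs ⊢
    obtain rfl | hn := hin.eq_or_lt
    · exact exists_split_one_one hs
    · exact exists_split_of_le_two hi (by omega) hn hs
  · simp only [epsB, le_refl, if_true, one_mul] at hs ⊢
    obtain rfl | hn := hin.eq_or_lt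
    · exact exists_split_two_two hs
    · exact exists_split_of_le_two hi le_rfl hn hs
  · simp only [epsB, Nat.reduceLeDiff, if_false, mul_add, mul_one] at hs ⊢
    obtain rfl | hn := hin.eq_or_lt
    · exact exists_split_three_three hs
    · exact exists_even_split_three hn hs
  · simp only [epsB, Nat.reduceLeDiff, if_false, mul_add, mul_one] at hs ⊢
    exact exists_split_four_four (even_two_mul m) hs

theorem SD_epsB_mul_add (hi : 1 ≤ i) (hin : i ≤ n) (hcase : i ≤ 3 ∨ n ≤ 4) (a b : ℕ) :
    SD n i (epsB i * (a + b)) = SD n i (epsB i * a) + SD n i (epsB i * b) := by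
  refine Set.Subset.antisymm ?_ ?_
  · induction a with
    | zero =>
      intro s hs
      exact Set.mem_add.2 ⟨0, zero_mem_SD _ _ _, s, by simpa using hs, zero_add s⟩
    | succ a ih =>
      intro s hs
      rw [show a + 1 + b = a + b + 1 by omega] at hs
      obtain ⟨t, ht, u, hu, rfl⟩ := exists_split_epsB hi hin hcase hs
      obtain ⟨v, hv, w, hw, rfl⟩ := Set.mem_add.1 (ih hu)
      refine Set.mem_add.2 ⟨t + v, ?_, w, hw, add_assoc t v w⟩
      rw [mul_add, mul_one, add_comm]
      exact add_mem_SD ht hv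
  · rw [mul_add]
    exact Set.add_subset_iff.2 fun t ht u hu => add_mem_SD ht hu

end Normality

/-- for `1 ≤ i ≤ n` with `i ≤ 3` or `n ≤ 4`, `S(D, k·ε_i·m·ω_i)` is the
`k`-fold Minkowski sum of `S(D, ε_i·m·ω_i)` with itself; i.e. the polytope
`P(D, ε_i·m·ω_i)` is a normal lattice polytope. -/
theorem SD_normal (n i : ℕ) (hi1 : 1 ≤ i) (hin : i ≤ n) (hcase : i ≤ 3 ∨ n ≤ 4)
    (m k : ℕ) (hk : 1 ≤ k) :
    SD n i (k * (epsB i * m)) = ∑ _j ∈ Finset.range k, SD n i (epsB i * m) := by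
  induction k, hk using Nat.le_induction with
  | base => simp
  | succ k _ ih =>
    rw [Finset.sum_range_succ, ← ih, Nat.mul_left_comm, Nat.mul_left_comm k, Nat.succ_mul]
    exact SD_epsB_mul_add hi1 hin hcase (k * m) m
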